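/- arXiv:2003.13113 — 2 statements merged into one kernel-verified Lean document; each statement's English description precedes it below -/
import Mathlib

section
/- The representation ρ of G_n on L²(M_n(ℝ)) is irreducible: if K is a closed linear subspace of L²(M_n(ℝ)) with ρ[x,h](K) ⊆ K for every [x,h] ∈ G_n, then K = {0} or K = L²(M_n(ℝ)). -/
open MeasureTheory
open scoped ENNReal

noncomputable section

/-- `M_n(ℝ)`, the `n × n` real matrices, identified with `ℝ^{n²}`. -/
abbrev Mn (n : ℕ) : Type := Matrix (Fin n) (Fin n) ℝ

instance (n : ℕ) : MeasureSpace (Mn n) := inferInstanceAs (MeasureSpace (Fin n → Fin n → ℝ))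

/-- `L²(M_n(ℝ)) ≅ L²(ℝ^{n²})`. -/
abbrev L2 (n : ℕ) := Lp (α := Mn n) ℂ 2 volume

open scoped FourierTransform SchwartzMap RealInnerProductSpace InnerProduct Kronecker Matrix

/-!
Translations act on the Fourier side as multiplication by characters. So if `f` lies in an
invariant subspace and `g` is orthogonal to it, then the Fourier transform of the integrable
function `ξ ↦ ⟪𝓕 g ξ, 𝓕 f ξ⟫` vanishes, and `𝓕 f` and `𝓕 g` have disjoint supports up to null sets.
Replacing `f` by its dilates, `𝓕 f ξ = 0` or `𝓕 g (A† ξ) = 0` for almost all pairs `(A, ξ)`. For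
almost every frequency matrix `ξ` the points `A† ξ` fill almost all of the space as `A` runs over
the left multiplications by invertible matrices, so if `𝓕 f` does not vanish almost everywhere,
then `𝓕 g` does.
-/

section LinearChangeOfVariables

variable {E F : Type*} [NormedAddCommGroup E] [NormedSpace ℝ E] [FiniteDimensional ℝ E]
  [MeasurableSpace E] [BorelSpace E] {μ : Measure E} [μ.IsAddHaarMeasure]
  [NormedAddCommGroup F]

lemma map_continuousLinearEquiv_addHaar (A : E ≃L[ℝ] E) :
    μ.map A = ENNReal.ofReal |(A : E →L[ℝ] E).det⁻¹| • μ :=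
  Measure.map_linearMap_addHaar_eq_smul_addHaar μ (f := (A : E →ₗ[ℝ] E))
    A.toLinearEquiv.isUnit_det'.ne_zero

lemma absolutelyContinuous_map_continuousLinearEquiv (A : E ≃L[ℝ] E) : μ ≪ μ.map A := by
  have hdet : (A : E →L[ℝ] E).det ≠ 0 := A.toLinearEquiv.isUnit_det'.ne_zero
  rw [map_continuousLinearEquiv_addHaar]
  exact Measure.absolutelyContinuous_smul (by simpa using hdet)

lemma quasiMeasurePreserving_continuousLinearEquiv (A : E ≃L[ℝ] E) :
    Measure.QuasiMeasurePreserving A μ μ :=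
  Measure.ContinuousLinearMap.quasiMeasurePreserving μ (A : E →L[ℝ] E)
    A.toLinearEquiv.isUnit_det'.ne_zero

lemma integral_comp_continuousLinearEquiv [NormedSpace ℝ F] (A : E ≃L[ℝ] E) (f : E → F) :
    ∫ v, f (A v) ∂μ = |(A : E →L[ℝ] E).det|⁻¹ • ∫ v, f v ∂μ :=
  calc
    ∫ v, f (A v) ∂μ = ∫ v, f v ∂μ.map A :=
      (A.toHomeomorph.measurableEmbedding.integral_map f).symm
    _ = |(A : E →L[ℝ] E).det|⁻¹ • ∫ v, f v ∂μ := by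
      rw [map_continuousLinearEquiv_addHaar, integral_smul_measure,
        ENNReal.toReal_ofReal (abs_nonneg _), abs_inv]

lemma eLpNorm_comp_continuousLinearEquiv (p : ℝ≥0∞) (A : E ≃L[ℝ] E) (f : E → F) :
    eLpNorm (f ∘ A) p μ =
      ENNReal.ofReal |(A : E →L[ℝ] E).det⁻¹| ^ (1 / p).toReal * eLpNorm f p μ := by
  have hdet : (A : E →L[ℝ] E).det ≠ 0 := A.toLinearEquiv.isUnit_det'.ne_zero
  calc
    eLpNorm (f ∘ A) p μ = eLpNorm f p (μ.map A) :=
      (A.toHomeomorph.measurableEmbedding.eLpNorm_map_measure).symm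
    _ = _ := by
      rw [map_continuousLinearEquiv_addHaar, eLpNorm_smul_measure_of_ne_zero (by simpa using hdet),
        smul_eq_mul]

lemma memLp_comp_continuousLinearEquiv {p : ℝ≥0∞} (A : E ≃L[ℝ] E) {f : E → F}
    (hf : MemLp f p μ) : MemLp (f ∘ A) p μ := by
  refine ⟨hf.1.comp_quasiMeasurePreserving (quasiMeasurePreserving_continuousLinearEquiv A), ?_⟩
  rw [eLpNorm_comp_continuousLinearEquiv]
  exact ENNReal.mul_lt_top (ENNReal.rpow_lt_top_of_nonneg (by positivity) ENNReal.ofReal_ne_top)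
    hf.2

/-- Composition with a linear automorphism of a finite-dimensional space, as a bounded operator
on `Lᵖ`. -/
def lpCompCLM [NormedSpace ℂ F] {p : ℝ≥0∞} [Fact (1 ≤ p)] (A : E ≃L[ℝ] E) :
    Lp F p μ →L[ℂ] Lp F p μ :=
  LinearMap.mkContinuous
    { toFun f := (memLp_comp_continuousLinearEquiv A (Lp.memLp f)).toLp
      map_add' f g := by
        rw [← MemLp.toLp_add, MemLp.toLp_eq_toLp_iff]
        exact (quasiMeasurePreserving_continuousLinearEquiv A).ae_eq_comp (Lp.coeFn_add f g)
      map_smul' c f := by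
        rw [RingHom.id_apply, ← MemLp.toLp_const_smul, MemLp.toLp_eq_toLp_iff]
        exact (quasiMeasurePreserving_continuousLinearEquiv A).ae_eq_comp (Lp.coeFn_smul c f) }
    (ENNReal.ofReal |(A : E →L[ℝ] E).det⁻¹| ^ (1 / p).toReal).toReal fun f =>
      ((Lp.norm_toLp _ (memLp_comp_continuousLinearEquiv A (Lp.memLp f))).trans (by
        rw [eLpNorm_comp_continuousLinearEquiv, ENNReal.toReal_mul, Lp.norm_def])).le

lemma coeFn_lpCompCLM [NormedSpace ℂ F] {p : ℝ≥0∞} [Fact (1 ≤ p)] (A : E ≃L[ℝ] E)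
    (f : Lp F p μ) : lpCompCLM A f =ᵐ[μ] f ∘ A :=
  MemLp.coeFn_toLp (memLp_comp_continuousLinearEquiv A (Lp.memLp f))

lemma lpCompCLM_schwartzMap_toLp [NormedSpace ℂ F] {p : ℝ≥0∞} [Fact (1 ≤ p)] (A : E ≃L[ℝ] E)
    (φ : 𝓢(E, F)) :
    lpCompCLM A (φ.toLp p μ) =
      (SchwartzMap.compCLMOfContinuousLinearEquiv ℂ A φ).toLp p μ := by
  refine Lp.ext ?_
  filter_upwards [coeFn_lpCompCLM A (φ.toLp p μ),
    (quasiMeasurePreserving_continuousLinearEquiv A).ae_eq_comp (φ.coeFn_toLp p μ),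
    (SchwartzMap.compCLMOfContinuousLinearEquiv ℂ A φ).coeFn_toLp p μ] with y h₁ h₂ h₃
  rw [h₁, h₂, h₃, SchwartzMap.compCLMOfContinuousLinearEquiv_apply]

end LinearChangeOfVariables

lemma eq_of_forall_schwartzMap_toLp {E F : Type*} [NormedAddCommGroup E]
    [NormedSpace ℝ E] [FiniteDimensional ℝ E] [MeasurableSpace E] [BorelSpace E]
    [NormedAddCommGroup F] [NormedSpace ℝ F] {G : Type*} [TopologicalSpace G] [T2Space G]
    {p : ℝ≥0∞} [Fact (1 ≤ p)] (hp : p ≠ ∞) {μ : Measure E} [μ.HasTemperateGrowth]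
    [IsFiniteMeasureOnCompacts μ] {T S : Lp F p μ → G} (hT : Continuous T)
    (hS : Continuous S) (h : ∀ φ : 𝓢(E, F), T (φ.toLp p μ) = S (φ.toLp p μ)) (f : Lp F p μ) :
    T f = S f :=
  congrFun ((SchwartzMap.denseRange_toLpCLM hp).equalizer hT hS (funext h)) f

section Fourier

variable {E F : Type*} [NormedAddCommGroup E] [InnerProductSpace ℝ E] [FiniteDimensional ℝ E]
  [MeasurableSpace E] [BorelSpace E]

lemma fourier_comp_continuousLinearEquiv [NormedAddCommGroup F] [NormedSpace ℂ F]
    (A : E ≃L[ℝ] E) (f : E → F) (ξ : E) :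
    𝓕 (f ∘ A) (((A : E →L[ℝ] E)†) ξ) = |(A : E →L[ℝ] E).det|⁻¹ • 𝓕 f ξ := by
  simp only [Real.fourier_eq, ContinuousLinearMap.adjoint_inner_right, Function.comp_apply,
    ContinuousLinearEquiv.coe_coe]
  exact integral_comp_continuousLinearEquiv A fun v => Real.fourierChar (-⟪v, ξ⟫) • f v

lemma fourier_comp_sub_right [NormedAddCommGroup F] [NormedSpace ℂ F] (f : E → F) (x ξ : E) :
    𝓕 (fun y => f (y - x)) ξ = Real.fourierChar (-⟪x, ξ⟫) • 𝓕 f ξ := by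
  have := congrFun (VectorFourier.fourierIntegral_comp_add_right Real.fourierChar
    (volume : Measure E) (innerₗ E) f (-x)) ξ
  simpa [sub_eq_add_neg] using! this

lemma ae_eq_zero_of_fourier_eq_zero [NormedAddCommGroup F] [NormedSpace ℂ F]
    [CompleteSpace F] {w : E → F} (hw : Integrable w) (h : 𝓕 w = 0) : w =ᵐ[volume] 0 := by
  have htempered : Lp.toTemperedDistributionCLM F volume 1 (hw.toL1 w) = 0 := by
    ext φ
    have hself : ∫ ξ, 𝓕 ⇑(𝓕⁻ φ : 𝓢(E, ℂ)) ξ • w ξ = ∫ x, (𝓕⁻ φ : 𝓢(E, ℂ)) x • 𝓕 w x := by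
      simpa [flip_innerₗ] using! VectorFourier.integral_fourierIntegral_smul_eq_flip
        (L := innerₗ E) (μ := volume) (ν := volume)
        Real.continuous_fourierChar continuous_inner (𝓕⁻ φ : 𝓢(E, ℂ)).integrable hw
    rw [← SchwartzMap.fourier_coe, FourierTransform.fourier_fourierInv_eq, h] at hself
    rw [Lp.toTemperedDistributionCLM_apply, Lp.toTemperedDistribution_apply,
      integral_congr_ae (hw.coeFn_toL1.mono fun ξ hξ => congrArg (φ ξ • ·) hξ), hself]
    simp
  have hzero : hw.toL1 w = 0 :=
    (LinearMap.ker_eq_bot'.1 Lp.ker_toTemperedDistributionCLM_eq_bot) _ htempered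
  exact hw.coeFn_toL1.symm.trans (Lp.eq_zero_iff_ae_eq_zero.1 hzero)

variable [NormedAddCommGroup F] [InnerProductSpace ℂ F] [CompleteSpace F]

lemma lpCompCLM_fourier_lpCompCLM {A B : E ≃L[ℝ] E}
    (hAB : (B : E →L[ℝ] E) = (A : E →L[ℝ] E)†) (f : Lp (α := E) F 2 volume) :
    lpCompCLM B (𝓕 (lpCompCLM A f)) = |(A : E →L[ℝ] E).det|⁻¹ • 𝓕 f := by
  revert f
  refine eq_of_forall_schwartzMap_toLp ENNReal.ofNat_ne_top (by fun_prop) (by fun_prop)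
    fun φ => ?_
  have hschwartz : SchwartzMap.compCLMOfContinuousLinearEquiv ℂ B
      (𝓕 (SchwartzMap.compCLMOfContinuousLinearEquiv ℂ A φ)) =
        |(A : E →L[ℝ] E).det|⁻¹ • 𝓕 φ := by
    ext ξ
    rw [SchwartzMap.compCLMOfContinuousLinearEquiv_apply, smul_apply,
      SchwartzMap.fourier_coe, SchwartzMap.fourier_coe, ← fourier_comp_continuousLinearEquiv,
      ← hAB]
    rfl
  rw [lpCompCLM_schwartzMap_toLp, SchwartzMap.toLp_fourier_eq, SchwartzMap.toLp_fourier_eq,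
    lpCompCLM_schwartzMap_toLp, hschwartz]
  exact map_smul (SchwartzMap.toLpCLM ℝ F 2 volume) _ _

/-- The character `ξ ↦ e^{-2πi⟨x, ξ⟩}` of `E`, as a multiplier on `Lᵖ` spaces. -/
def fourierCharLp (x : E) : Lp (α := E) ℂ ∞ volume :=
  MemLp.toLp (fun ξ => (Real.fourierChar (-⟪x, ξ⟫) : ℂ))
    (memLp_top_of_bound (by fun_prop) 1 (.of_forall fun ξ => (Circle.norm_coe _).le))

lemma coeFn_fourierCharLp (x : E) :
    fourierCharLp x =ᵐ[volume] fun ξ => (Real.fourierChar (-⟪x, ξ⟫) : ℂ) :=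
  MemLp.coeFn_toLp _

lemma fourier_compMeasurePreserving_sub_right (x : E) (f : Lp (α := E) F 2 volume) :
    𝓕 (Lp.compMeasurePreserving (· - x) (measurePreserving_sub_right volume x) f) =
      (fourierCharLp x • 𝓕 f : Lp (α := E) F 2 volume) := by
  revert f
  have hmul : Continuous fun q : Lp (α := E) F 2 volume =>
      (fourierCharLp x • q : Lp (α := E) F 2 volume) :=
    ((ContinuousLinearMap.lsmul ℂ ℂ).holderL volume ∞ 2 2 (fourierCharLp x)).continuous
  refine eq_of_forall_schwartzMap_toLp ENNReal.ofNat_ne_top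
    (ContinuousFourier.continuous_fourier.comp (Lp.isometry_compMeasurePreserving _).continuous)
    (hmul.comp ContinuousFourier.continuous_fourier) fun φ => ?_
  have htranslate :
      Lp.compMeasurePreserving (· - x) (measurePreserving_sub_right volume x) (φ.toLp 2 volume) =
        (SchwartzMap.compSubConstCLM ℂ x φ).toLp 2 volume := by
    refine Lp.ext ?_
    filter_upwards [Lp.coeFn_compMeasurePreserving (φ.toLp 2 volume)
        (measurePreserving_sub_right volume x),
      (measurePreserving_sub_right volume x).quasiMeasurePreserving.ae_eq_comp
        (φ.coeFn_toLp 2 volume),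
      (SchwartzMap.compSubConstCLM ℂ x φ).coeFn_toLp 2 volume] with y h₁ h₂ h₃
    rw [h₁, h₂, h₃, SchwartzMap.compSubConstCLM_apply, Function.comp_apply]
  rw [htranslate, SchwartzMap.toLp_fourier_eq, SchwartzMap.toLp_fourier_eq]
  refine Lp.ext ?_
  filter_upwards [(𝓕 (SchwartzMap.compSubConstCLM ℂ x φ)).coeFn_toLp 2 volume,
    Lp.coeFn_lpSMul (r := 2) (fourierCharLp x) ((𝓕 φ).toLp 2 volume), coeFn_fourierCharLp x,
    (𝓕 φ).coeFn_toLp 2 volume] with ξ h₁ h₂ h₃ h₄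
  rw [h₁, h₂, Pi.smul_apply', h₃, h₄, SchwartzMap.fourier_coe, SchwartzMap.fourier_coe]
  exact fourier_comp_sub_right φ x ξ

lemma ae_inner_fourier_eq_zero {f g : Lp (α := E) F 2 volume}
    (h : ∀ x, inner ℂ g
      (Lp.compMeasurePreserving (· - x) (measurePreserving_sub_right volume x) f) = 0) :
    ∀ᵐ ξ, inner ℂ (𝓕 g ξ) (𝓕 f ξ) = 0 := by
  refine ae_eq_zero_of_fourier_eq_zero (L2.integrable_inner (𝕜 := ℂ) (𝓕 g) (𝓕 f)) ?_
  ext x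
  rw [Pi.zero_apply, ← h x, ← Lp.inner_fourier_eq, fourier_compMeasurePreserving_sub_right,
    L2.inner_def, Real.fourier_eq]
  refine integral_congr_ae ?_
  filter_upwards [Lp.coeFn_lpSMul (r := 2) (fourierCharLp x) (𝓕 f), coeFn_fourierCharLp x]
    with ξ hmul hchar
  rw [hmul, Pi.smul_apply', hchar, inner_smul_right, real_inner_comm, Circle.smul_def, smul_eq_mul]

lemma eq_zero_of_ae_fourier_eq_zero {f : Lp (α := E) F 2 volume} (h : ∀ᵐ ξ, 𝓕 f ξ = 0) :
    f = 0 := by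
  have hf : 𝓕 f = 0 := Lp.eq_zero_iff_ae_eq_zero.2 h
  rw [← norm_eq_zero, ← Lp.norm_fourier_eq, hf, norm_zero]

end Fourier

section CompInvariant

variable {X Y F : Type*} [MeasurableSpace X] [MeasurableSpace Y] {μ : Measure X} {ν : Measure Y}
  [NormedAddCommGroup F] {p : ℝ≥0∞} {e : X ≃ᵐ Y}

lemma compMeasurePreserving_surjective (he : MeasurePreserving e μ ν) :
    Function.Surjective (Lp.compMeasurePreserving e he : Lp F p ν → Lp F p μ) := by
  intro f
  refine ⟨Lp.compMeasurePreserving e.symm he.symm f, Lp.ext ?_⟩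
  filter_upwards [Lp.coeFn_compMeasurePreserving (Lp.compMeasurePreserving e.symm he.symm f) he,
    he.quasiMeasurePreserving.ae_eq_comp (Lp.coeFn_compMeasurePreserving f he.symm)] with x h₁ h₂
  rw [h₁, h₂, Function.comp_apply, Function.comp_apply, e.symm_apply_apply]

variable [NormedSpace ℂ F]

/-- The subspace `K` of `Lᵖ` is stable under composition with `φ`. The condition is on all classes
that agree almost everywhere with `f ∘ φ`, so that it makes sense for every map `φ`. -/
def IsCompInvariant (K : Submodule ℂ (Lp F p μ)) (φ : X → X) : Prop :=
  ∀ f ∈ K, ∀ g : Lp F p μ, g =ᵐ[μ] f ∘ φ → g ∈ K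

variable {K : Submodule ℂ (Lp F p μ)}

lemma isCompInvariant_of_ae_eq_smul_comp {φ : X → X} {T : Lp F p μ → Lp F p μ} {c : ℝ}
    (hc : c ≠ 0) (hTK : ∀ f ∈ K, T f ∈ K) (hT : ∀ f ∈ K, T f =ᵐ[μ] c • (f ∘ φ)) :
    IsCompInvariant K φ := by
  intro f hf g hg
  have hgT : g = c⁻¹ • T f := by
    refine Lp.ext ?_
    filter_upwards [hg, hT f hf, Lp.coeFn_smul c⁻¹ (T f)] with x h₁ h₂ h₃
    rw [h₁, h₃, Pi.smul_apply, h₂, Pi.smul_apply, inv_smul_smul₀ hc]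
  exact hgT ▸ K.smul_of_tower_mem c⁻¹ (hTK f hf)

lemma IsCompInvariant.comap_compMeasurePreservingₗ {φ : X → X} {ψ : Y → Y}
    (hK : IsCompInvariant K φ) (he : MeasurePreserving e μ ν)
    (hψ : Measure.QuasiMeasurePreserving ψ ν ν) (hsemi : Function.Semiconj e φ ψ) :
    IsCompInvariant (K.comap (Lp.compMeasurePreservingₗ ℂ e he)) ψ := by
  have hφ : Measure.QuasiMeasurePreserving φ μ μ := by
    have hconj : φ = e.symm ∘ ψ ∘ e := funext fun x => by simp [← hsemi x]
    rw [hconj]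
    exact he.symm.quasiMeasurePreserving.comp (hψ.comp he.quasiMeasurePreserving)
  intro f hf g hg
  refine hK _ hf _ ?_
  calc
    Lp.compMeasurePreserving e he g =ᵐ[μ] g ∘ e := Lp.coeFn_compMeasurePreserving g he
    _ =ᵐ[μ] (f ∘ ψ) ∘ e := he.quasiMeasurePreserving.ae_eq_comp hg
    _ = (f ∘ e) ∘ φ := by rw [Function.comp_assoc, ← hsemi.comp_eq, Function.comp_assoc]
    _ =ᵐ[μ] Lp.compMeasurePreserving e he f ∘ φ :=
      hφ.ae_eq_comp (Lp.coeFn_compMeasurePreserving f he).symm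

lemma eq_bot_or_eq_top_of_comap_compMeasurePreservingₗ [Fact (1 ≤ p)]
    (he : MeasurePreserving e μ ν)
    (h : K.comap (Lp.compMeasurePreservingₗ ℂ e he) = ⊥ ∨
      K.comap (Lp.compMeasurePreservingₗ ℂ e he) = ⊤) : K = ⊥ ∨ K = ⊤ := by
  have hinj := Submodule.comap_injective_of_surjective
    (f := Lp.compMeasurePreservingₗ (E := F) (p := p) ℂ e he) (compMeasurePreserving_surjective he)
  have hker : (⊥ : Submodule ℂ (Lp F p μ)).comap (Lp.compMeasurePreservingₗ ℂ e he) = ⊥ :=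
    LinearMap.ker_eq_bot.2 (Lp.isometry_compMeasurePreserving he).injective
  exact h.imp (fun hbot => hinj (hbot.trans hker.symm)) (fun htop => hinj htop)

end CompInvariant

section Irreducibility

variable {E : Type*} [NormedAddCommGroup E] [InnerProductSpace ℝ E] [FiniteDimensional ℝ E]
  [MeasurableSpace E] [BorelSpace E] {K : Submodule ℂ (Lp (α := E) ℂ 2 volume)}

lemma IsCompInvariant.ae_fourier_eq_zero_or (htrans : ∀ x, IsCompInvariant K (· - x))
    {f g : Lp (α := E) ℂ 2 volume} (hf : f ∈ K) (hg : g ∈ Kᗮ) :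
    ∀ᵐ ξ, 𝓕 f ξ = 0 ∨ 𝓕 g ξ = 0 := by
  have hinner := ae_inner_fourier_eq_zero fun x => Submodule.inner_left_of_mem_orthogonal
    (htrans x f hf _ (Lp.coeFn_compMeasurePreserving f _)) hg
  filter_upwards [hinner] with ξ hξ
  simpa using hξ

lemma IsCompInvariant.ae_fourier_eq_zero_or_adjoint (htrans : ∀ x, IsCompInvariant K (· - x))
    {A : E →L[ℝ] E} (hA : IsUnit A) (hKA : IsCompInvariant K A)
    {f g : Lp (α := E) ℂ 2 volume} (hf : f ∈ K) (hg : g ∈ Kᗮ) :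
    ∀ᵐ ξ, 𝓕 f ξ = 0 ∨ 𝓕 g ((A†) ξ) = 0 := by
  obtain ⟨u, rfl⟩ := hA
  let B := ContinuousLinearEquiv.ofUnit (star u)
  have hB : ∀ ξ, B ξ = ((u : E →L[ℝ] E)†) ξ := fun _ => rfl
  set A := ContinuousLinearEquiv.ofUnit u
  have hdet : (A : E →L[ℝ] E).det ≠ 0 := A.toLinearEquiv.isUnit_det'.ne_zero
  have hdisjoint := (quasiMeasurePreserving_continuousLinearEquiv B).ae
    (IsCompInvariant.ae_fourier_eq_zero_or htrans (hKA f hf _ (coeFn_lpCompCLM A f)) hg)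
  have hdilate := coeFn_lpCompCLM B (𝓕 (lpCompCLM A f))
  rw [lpCompCLM_fourier_lpCompCLM (A := A) (B := B) rfl] at hdilate
  filter_upwards [hdisjoint, hdilate, Lp.coeFn_smul |(A : E →L[ℝ] E).det|⁻¹ (𝓕 f)]
    with ξ hξ hdilate hsmul
  rw [← hB]
  refine hξ.imp_left fun hzero => ?_
  rw [hsmul, Function.comp_apply, hzero, Pi.smul_apply] at hdilate
  simpa [hdet] using hdilate

theorem eq_bot_or_eq_top_of_isCompInvariant (hK : IsClosed (K : Set (Lp (α := E) ℂ 2 volume)))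
    (htrans : ∀ x, IsCompInvariant K (· - x))
    {Ω : Type*} [MeasurableSpace Ω] {μ : Measure Ω} [SFinite μ] {A : Ω → E →L[ℝ] E}
    (hAmeas : Measurable A) (hAunit : ∀ᵐ ω ∂μ, IsUnit (A ω))
    (hKA : ∀ᵐ ω ∂μ, IsCompInvariant K (A ω))
    (horbit : ∀ᵐ ξ : E, volume ≪ μ.map fun ω => ((A ω)†) ξ) :
    K = ⊥ ∨ K = ⊤ := by
  have : CompleteSpace K := hK.completeSpace_coe
  refine or_iff_not_imp_left.2 fun hbot => ?_
  obtain ⟨f, hf, hf0⟩ := Submodule.exists_mem_ne_zero_of_ne_bot hbot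
  rw [← Submodule.orthogonal_eq_bot_iff, Submodule.eq_bot_iff]
  intro g hg
  have hact : Measurable fun p : Ω × E => ((A p.1)†) p.2 := by fun_prop
  have hmeas : ∀ q : Lp (α := E) ℂ 2 volume, MeasurableSet {ξ | q ξ = 0} := fun q =>
    (Lp.stronglyMeasurable q).measurable (measurableSet_singleton 0)
  have hswap : ∀ᵐ ξ, ∀ᵐ ω ∂μ, 𝓕 f ξ = 0 ∨ 𝓕 g (((A ω)†) ξ) = 0 := by
    have hset : MeasurableSet {p : Ω × E | 𝓕 f p.2 = 0 ∨ 𝓕 g (((A p.1)†) p.2) = 0} :=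
      ((hmeas (𝓕 f)).preimage measurable_snd).union ((hmeas (𝓕 g)).preimage hact)
    refine (Measure.ae_ae_comm hset).1 ?_
    filter_upwards [hAunit, hKA] with ω hunit hinv
    exact IsCompInvariant.ae_fourier_eq_zero_or_adjoint htrans hunit hinv hf hg
  have hfreq : ∃ᶠ ξ in ae volume, 𝓕 f ξ ≠ 0 := fun h =>
    hf0 <| eq_zero_of_ae_fourier_eq_zero <| h.mono fun _ => not_not.1
  obtain ⟨ξ, hfξ, hac, hξ⟩ := (hfreq.and_eventually (horbit.and hswap)).exists
  have hgorbit : ∀ᵐ ω ∂μ, 𝓕 g (((A ω)†) ξ) = 0 := hξ.mono fun ω hω => hω.resolve_left hfξ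
  exact eq_zero_of_ae_fourier_eq_zero <| hac.ae_le <|
    (ae_map_iff (hact.comp measurable_prodMk_right).aemeasurable (hmeas (𝓕 g))).2 hgorbit

end Irreducibility

section EuclideanMatrix

variable {ι : Type*} [Fintype ι]

/-- Vectorisation `X ↦ Matrix.vec X` as an isomorphism onto Euclidean space, where the inner
product needed for the Fourier transform is available. -/
def euclideanVec : Matrix ι ι ℝ ≃ₗ[ℝ] EuclideanSpace ℝ (ι × ι) where
  toFun X := WithLp.toLp 2 X.vec
  invFun v := .of fun i j => v (j, i)
  map_add' _ _ := rfl
  map_smul' _ _ := rfl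
  left_inv _ := rfl
  right_inv _ := rfl

lemma toEuclideanCLM_kronecker_euclideanVec [DecidableEq ι] (A B X : Matrix ι ι ℝ) :
    Matrix.toEuclideanCLM (𝕜 := ℝ) (B ⊗ₖ A) (euclideanVec X) = euclideanVec (A * X * Bᵀ) :=
  congrArg (WithLp.toLp 2) (Matrix.kronecker_mulVec_vec A X B)

lemma ae_isUnit_euclideanVec_symm [DecidableEq ι] :
    ∀ᵐ v : EuclideanSpace ℝ (ι × ι), IsUnit (euclideanVec.symm v) := by
  have hmeas : MeasurableSet {v : EuclideanSpace ℝ (ι × ι) | IsUnit (euclideanVec.symm v)} := by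
    simp only [Matrix.isUnit_iff_isUnit_det, isUnit_iff_ne_zero]
    have hcont : Continuous fun v : EuclideanSpace ℝ (ι × ι) => (euclideanVec.symm v).det :=
      (LinearMap.continuous_of_finiteDimensional
        (euclideanVec (ι := ι)).symm.toLinearMap).matrix_det
    exact (hcont.measurable (measurableSet_singleton 0)).compl
  -- A line in the direction of the identity matrix meets the singular matrices in a finite set.
  refine ae_mem_of_ae_add_linearMap_mem
    (LinearMap.toSpanSingleton ℝ _ (euclideanVec (1 : Matrix ι ι ℝ))) volume volume hmeas
    fun v => ?_
  filter_upwards [measure_eq_zero_iff_ae_notMem.1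
    ((Matrix.finite_spectrum (-euclideanVec.symm v)).measure_zero volume)] with t ht
  rw [spectrum.notMem_iff] at ht
  change IsUnit (euclideanVec.symm (v + t • euclideanVec 1))
  rw [map_add, map_smul, LinearEquiv.symm_apply_apply, add_comm]
  simpa only [Algebra.algebraMap_eq_smul_one, sub_neg_eq_add] using ht

variable [DecidableEq ι]

lemma isUnit_toEuclideanCLM_kronecker {κ : Type*} [Fintype κ] [DecidableEq κ]
    {A : Matrix ι ι ℝ} {B : Matrix κ κ ℝ} (hA : IsUnit A) (hB : IsUnit B) :
    IsUnit (Matrix.toEuclideanCLM (𝕜 := ℝ) (A ⊗ₖ B)) :=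
  (Matrix.IsUnit.kronecker hA hB).map (Matrix.toEuclideanCLM (𝕜 := ℝ))

lemma adjoint_toEuclideanCLM_kronecker {κ : Type*} [Fintype κ] [DecidableEq κ]
    (A : Matrix ι ι ℝ) (B : Matrix κ κ ℝ) :
    (Matrix.toEuclideanCLM (𝕜 := ℝ) (A ⊗ₖ B))† =
      Matrix.toEuclideanCLM (𝕜 := ℝ) (Aᵀ ⊗ₖ Bᵀ) := by
  rw [← ContinuousLinearMap.star_eq_adjoint, ← map_star, Matrix.star_eq_conjTranspose,
    Matrix.conjTranspose_kronecker, Matrix.conjTranspose_eq_transpose_of_trivial,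
    Matrix.conjTranspose_eq_transpose_of_trivial]

lemma toEuclideanCLM_one_kronecker_euclideanVec_symm (v w : EuclideanSpace ℝ (ι × ι)) :
    Matrix.toEuclideanCLM (𝕜 := ℝ) (1 ⊗ₖ euclideanVec.symm v) w =
      Matrix.toEuclideanCLM (𝕜 := ℝ) ((euclideanVec.symm w)ᵀ ⊗ₖ 1) v := by
  obtain ⟨X, rfl⟩ := euclideanVec.surjective v
  obtain ⟨Y, rfl⟩ := euclideanVec.surjective w
  simp only [LinearEquiv.symm_apply_apply, toEuclideanCLM_kronecker_euclideanVec,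
    Matrix.transpose_one, Matrix.transpose_transpose, Matrix.mul_one, Matrix.one_mul]

lemma continuous_toEuclideanCLM_one_kronecker_euclideanVec_symm :
    Continuous fun v : EuclideanSpace ℝ (ι × ι) =>
      Matrix.toEuclideanCLM (𝕜 := ℝ) ((1 : Matrix ι ι ℝ) ⊗ₖ euclideanVec.symm v) := by
  refine continuous_clm_apply.2 fun w => ?_
  simp only [toEuclideanCLM_one_kronecker_euclideanVec_symm]
  fun_prop

lemma absolutelyContinuous_map_toEuclideanCLM_one_kronecker {w : EuclideanSpace ℝ (ι × ι)}
    (hw : IsUnit (euclideanVec.symm w)) :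
    volume ≪ volume.map fun v : EuclideanSpace ℝ (ι × ι) =>
      Matrix.toEuclideanCLM (𝕜 := ℝ) (1 ⊗ₖ euclideanVec.symm v) w := by
  simp only [toEuclideanCLM_one_kronecker_euclideanVec_symm]
  obtain ⟨u, hu⟩ :=
    isUnit_toEuclideanCLM_kronecker ((Matrix.isUnit_transpose _).2 hw)
      (isUnit_one (M := Matrix ι ι ℝ))
  rw [← hu]
  exact absolutelyContinuous_map_continuousLinearEquiv (ContinuousLinearEquiv.ofUnit u)

theorem eq_bot_or_eq_top_of_isCompInvariant_one_kronecker
    {K : Submodule ℂ (Lp (α := EuclideanSpace ℝ (ι × ι)) ℂ 2 volume)}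
    (hK : IsClosed (K : Set (Lp (α := EuclideanSpace ℝ (ι × ι)) ℂ 2 volume)))
    (htrans : ∀ x, IsCompInvariant K (· - x))
    (hmul : ∀ h : Matrix ι ι ℝ, IsUnit h →
      IsCompInvariant K (Matrix.toEuclideanCLM (𝕜 := ℝ) (1 ⊗ₖ h))) :
    K = ⊥ ∨ K = ⊤ := by
  let L (v : EuclideanSpace ℝ (ι × ι)) : EuclideanSpace ℝ (ι × ι) →L[ℝ] EuclideanSpace ℝ (ι × ι) :=
    Matrix.toEuclideanCLM (𝕜 := ℝ) (1 ⊗ₖ euclideanVec.symm v)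
  have hL : Continuous L := continuous_toEuclideanCLM_one_kronecker_euclideanVec_symm
  refine eq_bot_or_eq_top_of_isCompInvariant (μ := volume) (A := fun v => (L v)†)
    hK htrans (by fun_prop) ?_ ?_ ?_ <;> filter_upwards [ae_isUnit_euclideanVec_symm] with v hv
  · exact (isUnit_toEuclideanCLM_kronecker isUnit_one hv).star
  · rw [adjoint_toEuclideanCLM_kronecker, Matrix.transpose_one]
    exact hmul _ ((Matrix.isUnit_transpose _).2 hv)
  · simp only [ContinuousLinearMap.adjoint_adjoint]
    exact absolutelyContinuous_map_toEuclideanCLM_one_kronecker hv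

end EuclideanMatrix

lemma measurePreserving_vec (n : ℕ) :
    MeasurePreserving (Matrix.vec : Mn n → Fin n × Fin n → ℝ) := by
  have hmeas : Measurable (Matrix.vec : Mn n → Fin n × Fin n → ℝ) :=
    measurable_pi_lambda _ fun q => (measurable_pi_apply q.1).comp (measurable_pi_apply q.2)
  refine ⟨hmeas, (Measure.pi_eq fun s hs => ?_).symm⟩
  have hbox : (Matrix.vec : Mn n → Fin n × Fin n → ℝ) ⁻¹' Set.univ.pi s =
      Set.univ.pi fun i => Set.univ.pi fun j => s (j, i) := by
    ext X
    simp only [Set.mem_preimage, Set.mem_univ_pi, Prod.forall]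
    exact ⟨fun h i _ j _ => h j i, fun h j i => h i trivial j trivial⟩
  rw [Measure.map_apply hmeas (MeasurableSet.univ_pi hs), hbox, Fintype.prod_prod_type_right]
  exact (volume_pi_pi _).trans (Finset.prod_congr rfl fun i _ => volume_pi_pi _)

/-- Vectorisation as a measurable equivalence, along which invariant subspaces are transferred
between `L²` of matrices and `L²` of Euclidean space. -/
def euclideanVecMeasurableEquiv (n : ℕ) : Mn n ≃ᵐ EuclideanSpace ℝ (Fin n × Fin n) where
  toEquiv := euclideanVec.toEquiv
  measurable_toFun := (WithLp.measurable_toLp 2 _).comp (measurePreserving_vec n).measurable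
  measurable_invFun := measurable_pi_lambda _ fun i => measurable_pi_lambda _ fun j =>
    (by fun_prop : Measurable fun v : EuclideanSpace ℝ (Fin n × Fin n) => v (j, i))

lemma measurePreserving_euclideanVecMeasurableEquiv (n : ℕ) :
    MeasurePreserving (euclideanVecMeasurableEquiv n) :=
  (PiLp.volume_preserving_toLp (Fin n × Fin n)).comp (measurePreserving_vec n)

theorem eq_bot_or_eq_top_of_isCompInvariant_mul_left {n : ℕ} {K : Submodule ℂ (L2 n)}
    (hK : IsClosed (K : Set (L2 n))) (htrans : ∀ x, IsCompInvariant K (· - x))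
    (hmul : ∀ h : Mn n, IsUnit h → IsCompInvariant K (h * ·)) : K = ⊥ ∨ K = ⊤ := by
  have he := measurePreserving_euclideanVecMeasurableEquiv n
  refine eq_bot_or_eq_top_of_comap_compMeasurePreservingₗ he
    (eq_bot_or_eq_top_of_isCompInvariant_one_kronecker ?_ (fun x => ?_) fun h hh => ?_)
  · exact hK.preimage (Lp.isometry_compMeasurePreserving he).continuous
  · exact (htrans (euclideanVec.symm x)).comap_compMeasurePreservingₗ he
      (measurePreserving_sub_right volume x).quasiMeasurePreserving fun _ => rfl
  · obtain ⟨u, hu⟩ := isUnit_toEuclideanCLM_kronecker (isUnit_one (M := Mn n)) hh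
    refine (hmul h hh).comap_compMeasurePreservingₗ he ?_ fun X => ?_
    · rw [← hu]
      exact quasiMeasurePreserving_continuousLinearEquiv (ContinuousLinearEquiv.ofUnit u)
    · have hkron := toEuclideanCLM_kronecker_euclideanVec h 1 X
      rw [Matrix.transpose_one, Matrix.mul_one] at hkron
      exact hkron.symm

/-- The representation `ρ` of `G_n = M_n(ℝ) ⋊ GL_n(ℝ)` on `L²(M_n(ℝ))`,
given by `ρ[x,h]g (y) = |det h|^{-n/2} g (h⁻¹(y - x))`, is irreducible: any closed
`ρ`-invariant subspace `K` of `L²(M_n(ℝ))` is `{0}` or the whole space. -/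
theorem stmt_3 (n : ℕ) (hn : 1 ≤ n)
    (ρ : Mn n × Mn n → (L2 n ≃ₗᵢ[ℂ] L2 n))
    (hρ : ∀ x h : Mn n, h.det ≠ 0 → ∀ g : L2 n,
      ⇑(ρ (x, h) g) =ᵐ[volume]
        fun y : Mn n => (|h.det| ^ (-(n : ℝ) / 2)) • g (h⁻¹ * (y - x)))
    (K : Submodule ℂ (L2 n)) (hK : IsClosed (K : Set (L2 n)))
    (hinv : ∀ x h : Mn n, h.det ≠ 0 → ∀ g ∈ K, ρ (x, h) g ∈ K) :
    K = ⊥ ∨ K = ⊤ := by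
  have hρK (x h : Mn n) (hh : h.det ≠ 0) : IsCompInvariant K fun y => h⁻¹ * (y - x) :=
    isCompInvariant_of_ae_eq_smul_comp (Real.rpow_pos_of_pos (abs_pos.2 hh) _).ne'
      (hinv x h hh) fun f _ => hρ x h hh f
  refine eq_bot_or_eq_top_of_isCompInvariant_mul_left hK (fun x => ?_) fun h hh => ?_
  · simpa using hρK x 1 (by simp)
  · have hdet : IsUnit h.det := h.isUnit_iff_isUnit_det.1 hh
    simpa [Matrix.nonsing_inv_nonsing_inv h hdet] using
      hρK 0 h⁻¹ (h.isUnit_nonsing_inv_det hdet).ne_zero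
end
end

section
/- With F and P the explicit tile and discrete set in GL_n(ℝ) defined below, the pair (F,P) is a tiling system: (i) F̄·p ∩ F̄·q has Lebesgue measure zero (as a subset of ℝ^{n²}) for every pair of distinct p, q ∈ P, and (ii) GL_n(ℝ) \ ⋃_{p∈P} F̄·p has Lebesgue measure zero; here F̄ is the closure of F in GL_n(ℝ) and F̄·p = {ap : a ∈ F̄}. -/
noncomputable section

/-- The tile `F ⊆ GL_n(ℝ)`: matrices `s • (k * w * y)` with `s ∈ [1,2)`,
`k` orthogonal, `w = diag(w₁, …, w_{n-1}, (w₁⋯w_{n-1})⁻¹)` with each `w_i ∈ [1,2)`,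
and `y` unit upper triangular with strict upper entries in `[0,1)`. -/
def Fset (n : ℕ) : Set (Mn n) :=
  {a | ∃ (s : ℝ) (k : Mn n) (wd : Fin n → ℝ) (y : Mn n),
    s ∈ Set.Ico (1 : ℝ) 2 ∧
    k.transpose * k = 1 ∧
    (∀ i : Fin n, (i : ℕ) < n - 1 → wd i ∈ Set.Ico (1 : ℝ) 2) ∧
    (∀ i : Fin n, (i : ℕ) = n - 1 →
      wd i = (∏ j ∈ Finset.filter (fun j : Fin n => (j : ℕ) < n - 1) Finset.univ, wd j)⁻¹) ∧
    (∀ i, y i i = 1) ∧ (∀ i j : Fin n, j < i → y i j = 0) ∧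
    (∀ i j : Fin n, i < j → y i j ∈ Set.Ico (0 : ℝ) 1) ∧
    a = s • (k * Matrix.diagonal wd * y)}

/-- The discrete set `P ⊆ GL_n(ℝ)`: matrices `2^λ • u` with `u` upper triangular,
`u_{ii} = 2^{κ_i}`, `u_{ij} = 2^{κ_j} μ_{ij}` for `i < j`, where `λ, κ_i, μ_{ij} ∈ ℤ`
and `κ₁ + ⋯ + κ_n = 0` (i.e. `κ_n = -(κ₁ + ⋯ + κ_{n-1})`). -/
def Pset (n : ℕ) : Set (Mn n) :=
  {p | ∃ (lam : ℤ) (κ : Fin n → ℤ) (μ : Fin n → Fin n → ℤ),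
    (∑ i, κ i) = 0 ∧
    p = (2 : ℝ) ^ lam • Matrix.of (fun i j : Fin n =>
      if i = j then (2 : ℝ) ^ (κ i)
      else if i < j then (2 : ℝ) ^ (κ j) * (μ i j : ℝ)
      else 0)}

/-- The enlarged tile `F_o`: as `F`, but with `s, w_i ∈ (1-ε, 2+ε)` and strict upper
entries of `y` in `(-ε, 1+ε)`. -/
def FoSet (n : ℕ) (ε : ℝ) : Set (Mn n) :=
  {a | ∃ (s : ℝ) (k : Mn n) (wd : Fin n → ℝ) (y : Mn n),
    s ∈ Set.Ioo (1 - ε) (2 + ε) ∧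
    k.transpose * k = 1 ∧
    (∀ i : Fin n, (i : ℕ) < n - 1 → wd i ∈ Set.Ioo (1 - ε) (2 + ε)) ∧
    (∀ i : Fin n, (i : ℕ) = n - 1 →
      wd i = (∏ j ∈ Finset.filter (fun j : Fin n => (j : ℕ) < n - 1) Finset.univ, wd j)⁻¹) ∧
    (∀ i, y i i = 1) ∧ (∀ i j : Fin n, j < i → y i j = 0) ∧
    (∀ i j : Fin n, i < j → y i j ∈ Set.Ioo (-ε) (1 + ε)) ∧
    a = s • (k * Matrix.diagonal wd * y)}

open MeasureTheory

/-!
By the QR decomposition every invertible matrix is `k * Z` with `k` orthogonal and a unique upper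
triangular `Z` with positive diagonal. The set `P` consists of such triangular matrices, so
tiling `GL_n(ℝ)` by the `F·p` amounts to writing each `Z` uniquely as `R * p` with `p ∈ P` and
`R` in the triangular part of `F`. This is a division algorithm: the integer parts of the base-two
logarithms of `|det Z| ^ (1 / n)` and of the normalized diagonal entries give `λ` and `κ`, and
Euclidean division of the entries right of the diagonal, by increasing distance from it,
gives `μ`. So the translates `F·p` themselves partition `GL_n(ℝ)`.

It remains to see that `closure F \ F` is null. It is contained in finitely many compact sets
`O_n(ℝ) * C`, with `C` a facet on which one of the upper bounds defining `F` is attained. Each of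
them has uncountably many pairwise disjoint right translates, since a one-parameter group of
triangular matrices moves the value of the corresponding coordinate. If it had positive measure,
so would all these translates, which is impossible in a `σ`-finite measure space.
-/

section Triangular

variable {ι : Type*} [LinearOrder ι]

theorem mul_apply_self_of_isUpperTriangular {K : Type*} [NonUnitalNonAssocSemiring K] [Fintype ι]
    {A B : Matrix ι ι K} (hA : A.IsUpperTriangular) (hB : B.IsUpperTriangular) (i : ι) :
    (A * B) i i = A i i * B i i := by
  rw [Matrix.mul_apply]
  refine Finset.sum_eq_single i (fun l _ hl ↦ ?_) (by simp)
  rcases hl.lt_or_gt with h | h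
  · rw [hA h, zero_mul]
  · rw [hB h, mul_zero]

variable {K : Type*} [Field K] [LinearOrder K]

/-- Membership in the group `B⁺` of upper triangular matrices with positive diagonal, the
non-orthogonal factor of the Iwasawa decomposition. -/
structure IsPosTriangular (R : Matrix ι ι K) : Prop where
  isUpperTriangular : R.IsUpperTriangular
  diag_pos : ∀ i, 0 < R i i

namespace IsPosTriangular

variable {R S : Matrix ι ι K}

theorem diagonal {d : ι → K} (hd : ∀ i, 0 < d i) : IsPosTriangular (Matrix.diagonal d) where
  isUpperTriangular := Matrix.blockTriangular_diagonal d
  diag_pos i := by simpa using hd i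

theorem transvection [IsStrictOrderedRing K] {i j : ι} (hij : i < j) (t : K) :
    IsPosTriangular (Matrix.transvection i j t) where
  isUpperTriangular := Matrix.blockTriangular_transvection hij.le t
  diag_pos a := by
    have : ¬(i = a ∧ j = a) := fun h ↦ hij.ne (h.1.trans h.2.symm)
    simp [Matrix.transvection, this]

variable [Fintype ι] [IsStrictOrderedRing K]

theorem mul (hR : IsPosTriangular R) (hS : IsPosTriangular S) : IsPosTriangular (R * S) where
  isUpperTriangular := hR.isUpperTriangular.mul hS.isUpperTriangular
  diag_pos i := by
    rw [mul_apply_self_of_isUpperTriangular hR.isUpperTriangular hS.isUpperTriangular]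
    exact mul_pos (hR.diag_pos i) (hS.diag_pos i)

theorem det_pos (hR : IsPosTriangular R) : 0 < R.det := by
  rw [Matrix.det_of_isUpperTriangular hR.isUpperTriangular]
  exact Finset.prod_pos fun i _ ↦ hR.diag_pos i

theorem isUnit_det (hR : IsPosTriangular R) : IsUnit R.det :=
  hR.det_pos.ne'.isUnit

theorem isUpperTriangular_of_mul_eq (hR : IsPosTriangular R) (hS : IsPosTriangular S)
    {Q : Matrix ι ι K} (h : Q * R = S) : Q.IsUpperTriangular := by
  let := R.invertibleOfIsUnitDet hR.isUnit_det
  rw [← Matrix.mul_nonsing_inv_cancel_right R Q hR.isUnit_det, h]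
  exact hS.isUpperTriangular.mul
    (Matrix.blockTriangular_inv_of_blockTriangular hR.isUpperTriangular)

end IsPosTriangular

variable [Fintype ι] [IsStrictOrderedRing K]

theorem eq_one_of_mem_orthogonalGroup_of_mul_eq {Q R S : Matrix ι ι K}
    (hQ : Q ∈ Matrix.orthogonalGroup ι K) (hR : IsPosTriangular R) (hS : IsPosTriangular S)
    (h : Q * R = S) : Q = 1 := by
  rw [Matrix.mem_orthogonalGroup_iff'] at hQ
  have upper : Q.IsUpperTriangular := hR.isUpperTriangular_of_mul_eq hS h
  have lower : Q.transpose.IsUpperTriangular :=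
    hS.isUpperTriangular_of_mul_eq hR (by rw [← h, ← Matrix.mul_assoc, hQ, Matrix.one_mul])
  have diag_sq (i : ι) : Q i i * Q i i = 1 := by
    simpa [hQ] using (mul_apply_self_of_isUpperTriangular lower upper i).symm
  have diag_pos (i : ι) : 0 < Q i i := by
    have := hS.diag_pos i
    rw [← h, mul_apply_self_of_isUpperTriangular upper hR.isUpperTriangular] at this
    exact pos_of_mul_pos_left this (hR.diag_pos i).le
  ext i j
  rcases lt_trichotomy i j with hij | rfl | hij
  · rw [Matrix.one_apply_ne hij.ne]
    exact lower hij
  · rw [Matrix.one_apply_eq]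
    nlinarith [diag_sq i, diag_pos i]
  · rw [Matrix.one_apply_ne hij.ne']
    exact upper hij

theorem posTriangular_eq_of_orthogonal_mul_eq {k k' R S : Matrix ι ι K}
    (hk : k ∈ Matrix.orthogonalGroup ι K) (hk' : k' ∈ Matrix.orthogonalGroup ι K)
    (hR : IsPosTriangular R) (hS : IsPosTriangular S) (h : k * R = k' * S) : R = S := by
  have hkk := (Matrix.mem_orthogonalGroup_iff' ι K).1 hk
  have hkk' := (Matrix.mem_orthogonalGroup_iff ι K).1 hk'
  have hQ : k'.transpose * k ∈ Matrix.orthogonalGroup ι K := by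
    rw [Matrix.mem_orthogonalGroup_iff', Matrix.transpose_mul, Matrix.transpose_transpose,
      Matrix.mul_assoc, ← Matrix.mul_assoc k', hkk', Matrix.one_mul, hkk]
  have hQR : k'.transpose * k * R = S := by
    rw [Matrix.mul_assoc, h, ← Matrix.mul_assoc, (Matrix.mem_orthogonalGroup_iff' ι K).1 hk',
      Matrix.one_mul]
  rwa [eq_one_of_mem_orthogonalGroup_of_mul_eq hQ hR hS hQR, Matrix.one_mul] at hQR

theorem exists_orthogonal_mul_isUpperTriangular [LocallyFiniteOrderBot ι] (A : Matrix ι ι ℝ) :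
    ∃ k ∈ Matrix.orthogonalGroup ι ℝ, ∃ R : Matrix ι ι ℝ, R.IsUpperTriangular ∧ k * R = A := by
  let columns (j : ι) : EuclideanSpace ℝ ι := WithLp.toLp 2 (A.col j)
  let standard := EuclideanSpace.basisFun ι ℝ
  let b := InnerProductSpace.gramSchmidtOrthonormalBasis (𝕜 := ℝ) finrank_euclideanSpace columns
  refine ⟨standard.toBasis.toMatrix b, standard.toMatrix_orthonormalBasis_mem_orthogonal b,
    b.toBasis.toMatrix columns,
    InnerProductSpace.gramSchmidtOrthonormalBasis_inv_isUpperTriangular _ columns, ?_⟩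
  rw [← OrthonormalBasis.coe_toBasis b, Module.Basis.toMatrix_mul_toMatrix]
  ext i j
  simp [Module.Basis.toMatrix_apply, standard, columns]

theorem exists_orthogonal_mul_posTriangular [LocallyFiniteOrderBot ι] {A : Matrix ι ι ℝ}
    (hA : A.det ≠ 0) :
    ∃ k ∈ Matrix.orthogonalGroup ι ℝ, ∃ R : Matrix ι ι ℝ, IsPosTriangular R ∧ k * R = A := by
  obtain ⟨k, hk, R, hR, rfl⟩ := exists_orthogonal_mul_isUpperTriangular A
  have diag_ne_zero (i : ι) : R i i ≠ 0 := by
    rw [Matrix.det_mul, Matrix.det_of_isUpperTriangular hR] at hA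
    exact Finset.prod_ne_zero_iff.1 (right_ne_zero_of_mul hA) i (Finset.mem_univ i)
  let ε := Matrix.diagonal fun i ↦ (SignType.sign (R i i) : ℝ)
  have hε : ε * ε = 1 := by
    rw [Matrix.diagonal_mul_diagonal, ← Matrix.diagonal_one]
    congr 1 with i
    rcases (diag_ne_zero i).lt_or_gt with h | h <;> simp [h]
  refine ⟨k * ε, mul_mem hk ((Matrix.mem_orthogonalGroup_iff' ι ℝ).2 ?_), ε * R,
    ⟨(Matrix.blockTriangular_diagonal _).mul hR, fun i ↦ ?_⟩, ?_⟩
  · rw [Matrix.diagonal_transpose, hε]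
  · rw [Matrix.diagonal_mul, sign_mul_self]
    exact abs_pos.2 (diag_ne_zero i)
  · rw [Matrix.mul_assoc, ← Matrix.mul_assoc ε, hε, Matrix.one_mul]

end Triangular

section SizeReduction

variable {ι : Type*} [LinearOrder ι]

/-- Upper triangular matrices with ones on the diagonal; over `ℤ` they are the unipotent part of
the discrete set `P`. -/
structure IsUnitriangular {R : Type*} [Zero R] [One R] (M : Matrix ι ι R) : Prop where
  isUpperTriangular : M.IsUpperTriangular
  diag_eq_one : ∀ i, M i i = 1

theorem IsUnitriangular.map_intCast {K : Type*} [Ring K] {M : Matrix ι ι ℤ}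
    (hM : IsUnitriangular M) : IsUnitriangular (M.map (Int.cast : ℤ → K)) where
  isUpperTriangular := hM.isUpperTriangular.map (Int.castRingHom K)
  diag_eq_one i := by simp [hM.diag_eq_one]

variable {K : Type*} [Field K] [LinearOrder K]

/-- `Z = R * M` with `M` integral unitriangular and `R` upper triangular and size-reduced: every
entry right of the diagonal lies in `[0, d)`, where `d` is the diagonal entry of its row. -/
structure IsSizeReduction [Fintype ι] (Z R : Matrix ι ι K) (M : Matrix ι ι ℤ) : Prop where
  isUpperTriangular : R.IsUpperTriangular
  mem_Ico : ∀ i j, i < j → R i j ∈ Set.Ico 0 (R i i)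
  isUnitriangular : IsUnitriangular M
  mul_eq : R * M.map (Int.cast : ℤ → K) = Z

theorem IsSizeReduction.apply_self [Fintype ι] {Z R : Matrix ι ι K} {M : Matrix ι ι ℤ}
    (h : IsSizeReduction Z R M) (i : ι) : R i i = Z i i := by
  rw [← h.mul_eq, mul_apply_self_of_isUpperTriangular h.isUpperTriangular
    h.isUnitriangular.map_intCast.isUpperTriangular, h.isUnitriangular.map_intCast.diag_eq_one,
    mul_one]

variable [LocallyFiniteOrder ι]

theorem mul_apply_of_isUnitriangular_right {R : Type*} [NonAssocSemiring R] [Fintype ι]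
    {A M : Matrix ι ι R} (hA : A.IsUpperTriangular) (hM : IsUnitriangular M) {i j : ι}
    (hij : i < j) : (A * M) i j = A i j + A i i * M i j + ∑ l ∈ Finset.Ioo i j, A i l * M l j := by
  have support : ∑ l ∈ Finset.Icc i j, A i l * M l j = (A * M) i j := by
    refine Finset.sum_subset (Finset.subset_univ _) fun l _ hl ↦ ?_
    rw [Finset.mem_Icc, not_and_or, not_le, not_le] at hl
    rcases hl with h | h
    · rw [hA h, zero_mul]
    · rw [hM.isUpperTriangular h, mul_zero]
  rw [← support, ← Finset.Ioc_insert_left hij.le, Finset.sum_insert Finset.left_notMem_Ioc,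
    ← Finset.Ioo_insert_right hij, Finset.sum_insert Finset.right_notMem_Ioo, hM.diag_eq_one,
    mul_one, add_left_comm, add_assoc]

theorem Ioo_ssubset_Ioo_right {i j l : ι} (hl : l ∈ Finset.Ioo i j) :
    Finset.Ioo i l ⊂ Finset.Ioo i j :=
  (Finset.ssubset_iff_of_subset (Finset.Ioo_subset_Ioo_right (Finset.mem_Ioo.1 hl).2.le)).2
    ⟨l, hl, Finset.right_notMem_Ioo⟩

theorem Ioo_ssubset_Ioo_left {i j l : ι} (hl : l ∈ Finset.Ioo i j) :
    Finset.Ioo l j ⊂ Finset.Ioo i j :=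
  (Finset.ssubset_iff_of_subset (Finset.Ioo_subset_Ioo_left (Finset.mem_Ioo.1 hl).1.le)).2
    ⟨l, hl, Finset.left_notMem_Ioo⟩

theorem floor_add_mul_intCast_div [IsStrictOrderedRing K] [FloorRing K] {d r : K}
    (hr : r ∈ Set.Ico 0 d) (m : ℤ) : ⌊(r + d * m) / d⌋ = m := by
  have hd : 0 < d := hr.1.trans_lt hr.2
  rw [add_div, mul_div_cancel_left₀ _ hd.ne', Int.floor_add_intCast, add_eq_right,
    Int.floor_eq_zero_iff]
  exact ⟨div_nonneg hr.1 hd.le, (div_lt_one hd).2 hr.2⟩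

theorem fract_add_mul_intCast_div_mul [IsStrictOrderedRing K] [FloorRing K] {d r : K}
    (hr : r ∈ Set.Ico 0 d) (m : ℤ) : Int.fract ((r + d * m) / d) * d = r := by
  have hd : 0 < d := hr.1.trans_lt hr.2
  rw [Int.fract, floor_add_mul_intCast_div hr, sub_mul, div_mul_cancel₀ _ hd.ne', mul_comm d,
    add_sub_cancel_right]

variable [FloorRing K]

/-- The entries `(R i j, M i j)`, for `i < j`, of the size reduction `Z = R * M`. They are
obtained by Euclidean division by `Z i i = R i i` once the entries for all pairs strictly nested
in `(i, j)` are known. -/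
def sizeReductionEntry (Z : Matrix ι ι K) (i j : ι) : K × ℤ :=
  let c := Z i j - ∑ l : Finset.Ioo i j,
    (sizeReductionEntry Z i l).1 * (sizeReductionEntry Z l j).2
  (Int.fract (c / Z i i) * Z i i, ⌊c / Z i i⌋)
termination_by (Finset.Ioo i j).card
decreasing_by
  · exact Finset.card_lt_card (Ioo_ssubset_Ioo_right l.2)
  · exact Finset.card_lt_card (Ioo_ssubset_Ioo_left l.2)

theorem sizeReductionEntry_mem_Ico [IsStrictOrderedRing K] {Z : Matrix ι ι K} {i : ι}
    (hZ : 0 < Z i i) (j : ι) : (sizeReductionEntry Z i j).1 ∈ Set.Ico 0 (Z i i) := by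
  rw [sizeReductionEntry]
  exact ⟨mul_nonneg (Int.fract_nonneg _) hZ.le, mul_lt_of_lt_one_left hZ (Int.fract_lt_one _)⟩

theorem sizeReductionEntry_add_mul_add_sum {Z : Matrix ι ι K} {i : ι} (hZ : Z i i ≠ 0) (j : ι) :
    (sizeReductionEntry Z i j).1 + Z i i * (sizeReductionEntry Z i j).2 +
      ∑ l ∈ Finset.Ioo i j, (sizeReductionEntry Z i l).1 * (sizeReductionEntry Z l j).2 =
      Z i j := by
  rw [sizeReductionEntry, mul_comm (Z i i), ← add_mul, Int.fract_add_floor, div_mul_cancel₀ _ hZ,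
    Finset.sum_coe_sort (Finset.Ioo i j) fun l ↦
      (sizeReductionEntry Z i l).1 * ((sizeReductionEntry Z l j).2 : K), sub_add_cancel]

variable [Fintype ι] [IsStrictOrderedRing K] {Z R : Matrix ι ι K} {M : Matrix ι ι ℤ}

theorem exists_isSizeReduction (hZ : IsPosTriangular Z) : ∃ R M, IsSizeReduction Z R M := by
  let R : Matrix ι ι K := .of fun i j ↦
    if i < j then (sizeReductionEntry Z i j).1 else if i = j then Z i i else 0
  let M : Matrix ι ι ℤ := .of fun i j ↦
    if i < j then (sizeReductionEntry Z i j).2 else if i = j then 1 else 0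
  have R_diag (i : ι) : R i i = Z i i := by simp [R]
  have R_right {i j : ι} (hij : i < j) : R i j = (sizeReductionEntry Z i j).1 := if_pos hij
  have M_right {i j : ι} (hij : i < j) : M i j = (sizeReductionEntry Z i j).2 := if_pos hij
  have hR : R.IsUpperTriangular := fun i j (hji : j < i) ↦ by simp [R, hji.not_gt, hji.ne']
  have hM : IsUnitriangular M :=
    ⟨fun i j (hji : j < i) ↦ by simp [M, hji.not_gt, hji.ne'], fun i ↦ by simp [M]⟩
  have hM' : IsUnitriangular (M.map (Int.cast : ℤ → K)) := hM.map_intCast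
  refine ⟨R, M, hR, fun i j hij ↦ ?_, hM, ?_⟩
  · rw [R_right hij, R_diag]
    exact sizeReductionEntry_mem_Ico (hZ.diag_pos i) j
  ext i j
  rcases lt_trichotomy i j with hij | rfl | hij
  · rw [mul_apply_of_isUnitriangular_right hR hM' hij, R_diag, R_right hij, Matrix.map_apply,
      M_right hij, ← sizeReductionEntry_add_mul_add_sum (hZ.diag_pos i).ne' j]
    congr 1
    refine Finset.sum_congr rfl fun l hl ↦ ?_
    rw [Finset.mem_Ioo] at hl
    rw [R_right hl.1, Matrix.map_apply, M_right hl.2]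
  · rw [mul_apply_self_of_isUpperTriangular hR hM'.isUpperTriangular, hM'.diag_eq_one, mul_one,
      R_diag]
  · rw [hR.mul hM'.isUpperTriangular hij, hZ.isUpperTriangular hij]

namespace IsSizeReduction

theorem eq_sizeReductionEntry (h : IsSizeReduction Z R M) {i j : ι} (hij : i < j) :
    (R i j, M i j) = sizeReductionEntry Z i j := by
  have nested : ∑ l ∈ Finset.Ioo i j, R i l * M l j = ∑ l : Finset.Ioo i j,
      (sizeReductionEntry Z i l).1 * ((sizeReductionEntry Z l j).2 : K) := by
    rw [← Finset.sum_coe_sort]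
    refine Finset.sum_congr rfl fun l _ ↦ ?_
    have hl := Finset.mem_Ioo.1 l.2
    rw [← h.eq_sizeReductionEntry hl.1, ← h.eq_sizeReductionEntry hl.2]
  have hmem : R i j ∈ Set.Ico 0 (Z i i) := h.apply_self i ▸ h.mem_Ico i j hij
  have division : R i j + Z i i * M i j = Z i j - ∑ l : Finset.Ioo i j,
      (sizeReductionEntry Z i l).1 * ((sizeReductionEntry Z l j).2 : K) := by
    rw [eq_sub_iff_add_eq, ← nested, ← h.apply_self, ← congrFun₂ h.mul_eq i j,
      mul_apply_of_isUnitriangular_right h.isUpperTriangular h.isUnitriangular.map_intCast hij]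
    rfl
  rw [sizeReductionEntry, ← division, fract_add_mul_intCast_div_mul hmem,
    floor_add_mul_intCast_div hmem]
termination_by (Finset.Ioo i j).card
decreasing_by
  · exact Finset.card_lt_card (Ioo_ssubset_Ioo_right l.2)
  · exact Finset.card_lt_card (Ioo_ssubset_Ioo_left l.2)

theorem right_unique {R' : Matrix ι ι K} {M' : Matrix ι ι ℤ} (h : IsSizeReduction Z R M)
    (h' : IsSizeReduction Z R' M') : M = M' := by
  ext i j
  rcases lt_trichotomy i j with hij | rfl | hij
  · have := (h.eq_sizeReductionEntry hij).trans (h'.eq_sizeReductionEntry hij).symm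
    exact congrArg Prod.snd this
  · rw [h.isUnitriangular.diag_eq_one, h'.isUnitriangular.diag_eq_one]
  · rw [h.isUnitriangular.isUpperTriangular hij, h'.isUnitriangular.isUpperTriangular hij]

end IsSizeReduction

end SizeReduction

section Scale

variable {ι : Type*} [Fintype ι] [DecidableEq ι] {A B : Matrix ι ι ℝ}

/-- `|det A| ^ (1 / n)`, the homothety factor of `A` in `GL_n(ℝ) = ℝ₊ × {|det| = 1}`; it recovers
`s` from an element of `F` and `2 ^ λ` from an element of `P`. -/
def scale (A : Matrix ι ι ℝ) : ℝ :=
  |A.det| ^ (Fintype.card ι : ℝ)⁻¹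

theorem scale_pos (hA : A.det ≠ 0) : 0 < scale A :=
  Real.rpow_pos_of_pos (abs_pos.2 hA) _

theorem scale_mul : scale (A * B) = scale A * scale B := by
  rw [scale, Matrix.det_mul, abs_mul, Real.mul_rpow (abs_nonneg _) (abs_nonneg _), scale, scale]

theorem scale_of_det_eq_one (hA : A.det = 1) : scale A = 1 := by
  rw [scale, hA, abs_one, Real.one_rpow]

theorem continuous_scale : Continuous (scale : Matrix ι ι ℝ → ℝ) :=
  continuous_id.matrix_det.abs.rpow_const fun _ ↦ Or.inr (by positivity)

variable [Nonempty ι]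

theorem scale_pow_card : scale A ^ Fintype.card ι = |A.det| :=
  Real.rpow_inv_natCast_pow (abs_nonneg _) Fintype.card_ne_zero

theorem scale_smul_of_det_eq_one {c : ℝ} (hc : 0 ≤ c) (hA : A.det = 1) : scale (c • A) = c := by
  rw [scale, Matrix.det_smul, hA, mul_one, abs_of_nonneg (pow_nonneg hc _),
    Real.pow_rpow_inv_natCast hc Fintype.card_ne_zero]

end Scale

section Lattice

theorem prod_zpow_eq_zpow_sum {α K : Type*} [CommGroupWithZero K] {a : K} (ha : a ≠ 0)
    (s : Finset α) (f : α → ℤ) : ∏ i ∈ s, a ^ f i = a ^ ∑ i ∈ s, f i := by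
  induction s using Finset.cons_induction with
  | empty => simp
  | cons i s hi ih => rw [Finset.prod_cons, Finset.sum_cons, zpow_add₀ ha, ih]

variable {ι : Type*} [LinearOrder ι] [Fintype ι] {l : ℤ} {κ : ι → ℤ} {M : Matrix ι ι ℤ}

/-- The element `2 ^ l • (M * diag(2 ^ κ))` of the discrete set `P`; the integers `μ i j` of the
definition of `P` are the entries of the unitriangular matrix `M`. -/
def latticeElement (l : ℤ) (κ : ι → ℤ) (M : Matrix ι ι ℤ) : Matrix ι ι ℝ :=
  (2 : ℝ) ^ l • (M.map (Int.cast : ℤ → ℝ) * Matrix.diagonal fun i ↦ (2 : ℝ) ^ κ i)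

theorem latticeElement_eq_mul_diagonal : latticeElement l κ M =
    M.map (Int.cast : ℤ → ℝ) * Matrix.diagonal fun i ↦ (2 : ℝ) ^ l * 2 ^ κ i := by
  rw [latticeElement, ← Matrix.mul_smul, ← Matrix.diagonal_smul]
  rfl

theorem latticeElement_apply_self (hM : IsUnitriangular M) (i : ι) :
    latticeElement l κ M i i = 2 ^ l * 2 ^ κ i := by
  rw [latticeElement_eq_mul_diagonal, Matrix.mul_diagonal, hM.map_intCast.diag_eq_one, one_mul]

theorem isPosTriangular_latticeElement (hM : IsUnitriangular M) :
    IsPosTriangular (latticeElement l κ M) where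
  isUpperTriangular := by
    rw [latticeElement_eq_mul_diagonal]
    exact hM.map_intCast.isUpperTriangular.mul (Matrix.blockTriangular_diagonal _)
  diag_pos i := by
    rw [latticeElement_apply_self hM]
    positivity

theorem scale_latticeElement [Nonempty ι] (hM : IsUnitriangular M) (hκ : ∑ i, κ i = 0) :
    scale (latticeElement l κ M) = 2 ^ l := by
  refine scale_smul_of_det_eq_one (by positivity) ?_
  have upper := hM.map_intCast (K := ℝ).isUpperTriangular
  rw [Matrix.det_mul, Matrix.det_of_isUpperTriangular upper, Matrix.det_diagonal,
    Finset.prod_congr rfl fun i _ ↦ hM.map_intCast.diag_eq_one i, Finset.prod_const_one, one_mul,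
    prod_zpow_eq_zpow_sum two_ne_zero, hκ, zpow_zero]

section SizeReduced

variable [LocallyFiniteOrder ι]

theorem exists_sizeReduced_mul_latticeElement_eq {Z : Matrix ι ι ℝ} (hZ : IsPosTriangular Z)
    (l : ℤ) (κ : ι → ℤ) :
    ∃ R M, IsPosTriangular R ∧ (∀ i, R i i = Z i i / (2 ^ l * 2 ^ κ i)) ∧
      (∀ i j, i < j → R i j ∈ Set.Ico 0 (R i i)) ∧ IsUnitriangular M ∧
      R * latticeElement l κ M = Z := by
  let e (i : ι) : ℝ := 2 ^ l * 2 ^ κ i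
  have e_pos (i : ι) : 0 < e i := by positivity
  have inv_mul : Matrix.diagonal (fun i ↦ (e i)⁻¹) * Matrix.diagonal e = 1 := by
    rw [Matrix.diagonal_mul_diagonal, ← Matrix.diagonal_one]
    congr 1 with i
    exact inv_mul_cancel₀ (e_pos i).ne'
  have hpos : IsPosTriangular (Z * Matrix.diagonal fun i ↦ (e i)⁻¹) :=
    hZ.mul (.diagonal fun i ↦ inv_pos.2 (e_pos i))
  obtain ⟨R, M, h⟩ := exists_isSizeReduction hpos
  have diag (i : ι) : R i i = Z i i / e i := by
    rw [h.apply_self, Matrix.mul_diagonal, div_eq_mul_inv]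
  refine ⟨R, M, ⟨h.isUpperTriangular, fun i ↦ diag i ▸ div_pos (hZ.diag_pos i) (e_pos i)⟩, diag,
    h.mem_Ico, h.isUnitriangular, ?_⟩
  rw [latticeElement_eq_mul_diagonal, ← Matrix.mul_assoc, h.mul_eq, Matrix.mul_assoc, inv_mul,
    Matrix.mul_one]

theorem unitriangular_eq_of_sizeReduced_mul_latticeElement_eq {R R' : Matrix ι ι ℝ}
    {M' : Matrix ι ι ℤ} (hR : R.IsUpperTriangular) (hR' : R'.IsUpperTriangular)
    (hR_mem : ∀ i j, i < j → R i j ∈ Set.Ico 0 (R i i))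
    (hR'_mem : ∀ i j, i < j → R' i j ∈ Set.Ico 0 (R' i i)) (hM : IsUnitriangular M)
    (hM' : IsUnitriangular M') (h : R * latticeElement l κ M = R' * latticeElement l κ M') :
    M = M' := by
  have hdiag : IsPosTriangular (Matrix.diagonal fun i : ι ↦ (2 : ℝ) ^ l * 2 ^ κ i) :=
    .diagonal fun i ↦ by positivity
  rw [latticeElement_eq_mul_diagonal, latticeElement_eq_mul_diagonal, ← Matrix.mul_assoc,
    ← Matrix.mul_assoc] at h
  have mul_eq : R' * M'.map (Int.cast : ℤ → ℝ) = R * M.map (Int.cast : ℤ → ℝ) :=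
    (((Matrix.isUnit_iff_isUnit_det _).2 hdiag.isUnit_det).mul_right_cancel h).symm
  exact IsSizeReduction.right_unique ⟨hR, hR_mem, hM, rfl⟩ ⟨hR', hR'_mem, hM', mul_eq⟩

end SizeReduced

theorem mem_Pset_iff {n : ℕ} {p : Mn n} : p ∈ Pset n ↔
    ∃ l κ M, IsUnitriangular M ∧ ∑ i, κ i = 0 ∧ p = latticeElement l κ M := by
  constructor
  · rintro ⟨l, κ, μ, hκ, rfl⟩
    refine ⟨l, κ, .of fun i j ↦ if i = j then 1 else if i < j then μ i j else 0,
      ⟨fun i j (hij : j < i) ↦ by simp [hij.ne', hij.not_gt], fun i ↦ by simp⟩, hκ, ?_⟩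
    ext i j
    rcases lt_trichotomy i j with hij | rfl | hij
    · simp [latticeElement, hij, hij.ne, mul_comm]
    · simp [latticeElement]
    · simp [latticeElement, hij.ne', hij.not_gt]
  · rintro ⟨l, κ, M, hM, hκ, rfl⟩
    refine ⟨l, κ, M, hκ, ?_⟩
    ext i j
    rcases lt_trichotomy i j with hij | rfl | hij
    · simp [latticeElement, hij, hij.ne, mul_comm]
    · simp [latticeElement, hM.diag_eq_one]
    · simp [latticeElement, hij.ne', hij.not_gt, hM.isUpperTriangular hij]

end Lattice

section Tile

variable {n : ℕ}

/-- The triangular part of `F`: in the coordinates `s = scale R`, `s * w i = R i i` and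
`R i i * y i j = R i j`, the constraints on `s`, `w` and `y` bound entries of `R` without
divisions. The last diagonal entry is determined by the others and `s`. -/
def tile (n : ℕ) : Set (Mn (n + 1)) :=
  {R | IsPosTriangular R ∧ scale R ∈ Set.Ico 1 2 ∧
    (∀ i : Fin n, R i.castSucc i.castSucc ∈ Set.Ico (scale R) (2 * scale R)) ∧
    ∀ i j, i < j → R i j ∈ Set.Ico 0 (R i i)}

theorem mem_tile_of_eq_smul {s : ℝ} {w : Fin (n + 1) → ℝ} {y : Mn (n + 1)}
    (hs : s ∈ Set.Ico 1 2) (hw : ∀ i : Fin n, w i.castSucc ∈ Set.Ico 1 2)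
    (hprod : ∏ i, w i = 1) (hy : IsUnitriangular y) (hy' : ∀ i j, i < j → y i j ∈ Set.Ico 0 1) :
    s • (Matrix.diagonal w * y) ∈ tile n := by
  have s_pos : 0 < s := one_pos.trans_le hs.1
  have w_castSucc_pos (i : Fin n) : 0 < w i.castSucc := one_pos.trans_le (hw i).1
  have w_pos (i : Fin (n + 1)) : 0 < w i := by
    cases i using Fin.lastCases with
    | cast i => exact w_castSucc_pos i
    | last =>
      rw [Fin.prod_univ_castSucc] at hprod
      exact pos_of_mul_pos_right (hprod ▸ one_pos)
        (Finset.prod_nonneg fun i _ ↦ (w_castSucc_pos i).le)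
  have apply (i j : Fin (n + 1)) : (s • (Matrix.diagonal w * y)) i j = s * w i * y i j := by
    rw [Matrix.smul_apply, Matrix.diagonal_mul, smul_eq_mul, mul_assoc]
  have apply_self (i : Fin (n + 1)) : (s • (Matrix.diagonal w * y)) i i = s * w i := by
    rw [apply, hy.diag_eq_one, mul_one]
  have hscale : scale (s • (Matrix.diagonal w * y)) = s :=
    scale_smul_of_det_eq_one s_pos.le <| by
      rw [Matrix.det_mul, Matrix.det_diagonal, hprod, one_mul,
        Matrix.det_of_isUpperTriangular hy.isUpperTriangular]
      exact Finset.prod_eq_one fun i _ ↦ hy.diag_eq_one i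
  refine ⟨⟨fun i j hij ↦ ?_, fun i ↦ ?_⟩, ?_, fun i ↦ ?_, fun i j hij ↦ ?_⟩
  · rw [apply, hy.isUpperTriangular hij, mul_zero]
  · rw [apply_self]
    exact mul_pos s_pos (w_pos i)
  · rwa [hscale]
  · rw [hscale, apply_self, mul_comm 2]
    exact ⟨le_mul_of_one_le_right s_pos.le (hw i).1, mul_lt_mul_of_pos_left (hw i).2 s_pos⟩
  · have hsw : 0 < s * w i := mul_pos s_pos (w_pos i)
    rw [apply i j, apply_self i]
    exact ⟨mul_nonneg hsw.le (hy' i j hij).1, mul_lt_of_lt_one_right hsw (hy' i j hij).2⟩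

theorem exists_eq_smul_of_mem_tile {R : Mn (n + 1)} (hR : R ∈ tile n) :
    ∃ (s : ℝ) (w : Fin (n + 1) → ℝ) (y : Mn (n + 1)), s ∈ Set.Ico 1 2 ∧
      (∀ i : Fin n, w i.castSucc ∈ Set.Ico 1 2) ∧ ∏ i, w i = 1 ∧ IsUnitriangular y ∧
      (∀ i j, i < j → y i j ∈ Set.Ico 0 1) ∧ R = s • (Matrix.diagonal w * y) := by
  obtain ⟨hpos, hscale, hdiag, hright⟩ := hR
  have scale_pos : 0 < scale R := one_pos.trans_le hscale.1
  refine ⟨scale R, fun i ↦ R i i / scale R, .of fun i j ↦ R i j / R i i, hscale, fun i ↦ ?_, ?_,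
    ⟨fun i j hij ↦ ?_, fun i ↦ ?_⟩, fun i j hij ↦ ?_, ?_⟩
  · exact ⟨(one_le_div scale_pos).2 (hdiag i).1, (div_lt_iff₀ scale_pos).2 (hdiag i).2⟩
  · have hdet : scale R ^ (n + 1) = R.det := by
      simpa [abs_of_pos hpos.det_pos] using scale_pow_card (A := R)
    rw [Finset.prod_div_distrib, Finset.prod_const, Finset.card_univ, Fintype.card_fin, hdet,
      Matrix.det_of_isUpperTriangular hpos.isUpperTriangular]
    exact div_self (Finset.prod_pos fun i _ ↦ hpos.diag_pos i).ne'
  · rw [Matrix.of_apply, hpos.isUpperTriangular hij, zero_div]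
  · exact div_self (hpos.diag_pos i).ne'
  · exact ⟨div_nonneg (hright i j hij).1 (hpos.diag_pos i).le,
      (div_lt_one (hpos.diag_pos i)).2 (hright i j hij).2⟩
  · ext i j
    rw [Matrix.smul_apply, Matrix.diagonal_mul, Matrix.of_apply, smul_eq_mul,
      div_mul_div_cancel₀' (hpos.diag_pos i).ne', mul_div_cancel₀ _ scale_pos.ne']

theorem prod_filter_lt_last (w : Fin (n + 1) → ℝ) :
    ∏ j ∈ Finset.univ.filter fun j : Fin (n + 1) ↦ (j : ℕ) < n + 1 - 1, w j =
      ∏ j : Fin n, w j.castSucc := by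
  rw [Finset.prod_filter, Fin.prod_univ_castSucc]
  simp

open scoped Pointwise in
theorem Fset_eq_orthogonalGroup_mul_tile :
    Fset (n + 1) = (Matrix.orthogonalGroup (Fin (n + 1)) ℝ : Set (Mn (n + 1))) * tile n := by
  ext a
  constructor
  · rintro ⟨s, k, w, y, hs, hk, hw, hlast, hy_one, hy_zero, hy, rfl⟩
    replace hw (i : Fin n) : w i.castSucc ∈ Set.Ico 1 2 := hw i.castSucc (by simp)
    have hprod : ∏ i, w i = 1 := by
      rw [Fin.prod_univ_castSucc, hlast (Fin.last n) (by simp), prod_filter_lt_last]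
      exact mul_inv_cancel₀ (Finset.prod_ne_zero_iff.2 fun i _ ↦ (one_pos.trans_le (hw i).1).ne')
    refine ⟨k, (Matrix.mem_orthogonalGroup_iff' _ _).2 hk, _,
      mem_tile_of_eq_smul hs hw hprod ⟨fun i j hij ↦ hy_zero i j hij, hy_one⟩ hy, ?_⟩
    rw [Matrix.mul_assoc]
    exact Matrix.mul_smul k s _
  · rintro ⟨k, hk, R, hR, rfl⟩
    obtain ⟨s, w, y, hs, hw, hprod, hy, hy', rfl⟩ := exists_eq_smul_of_mem_tile hR
    refine ⟨s, k, w, y, hs, (Matrix.mem_orthogonalGroup_iff' _ _).1 hk, fun i hi ↦ ?_,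
      fun i hi ↦ ?_, hy.diag_eq_one, fun i j hij ↦ hy.isUpperTriangular hij, hy', ?_⟩
    · exact hw ⟨i, hi⟩
    · obtain rfl : i = Fin.last n := Fin.ext hi
      rw [prod_filter_lt_last]
      rw [Fin.prod_univ_castSucc] at hprod
      exact eq_inv_of_mul_eq_one_right hprod
    · rw [Matrix.mul_assoc]
      exact Matrix.mul_smul k s _

end Tile

section Tiling

section Log

variable {K : Type*} [Field K] [LinearOrder K] [IsStrictOrderedRing K] [FloorSemiring K] {b : ℕ}

theorem log_mul_zpow_div (hb : 1 < b) {c x : K} (hc : 0 < c) (hx : x ∈ Set.Ico c (b * c))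
    (a : ℤ) : Int.log b (x * b ^ a / c) = a := by
  have hb_pos : (0 : K) < b := Nat.cast_pos.2 (one_pos.trans hb)
  have hpow : (0 : K) < b ^ a := zpow_pos hb_pos a
  have hpos : 0 < x * b ^ a / c := div_pos (mul_pos (hc.trans_le hx.1) hpow) hc
  apply le_antisymm
  · rw [← Int.lt_add_one_iff, ← Int.lt_zpow_iff_log_lt hb hpos, div_lt_iff₀ hc,
      zpow_add_one₀ hb_pos.ne', mul_comm x, mul_assoc]
    exact mul_lt_mul_of_pos_left hx.2 hpow
  · rw [← Int.zpow_le_iff_le_log hb hpos, le_div_iff₀ hc, mul_comm]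
    exact mul_le_mul_of_nonneg_right hx.1 hpow.le

theorem div_zpow_log_mem_Ico (hb : 1 < b) {x : K} (hx : 0 < x) :
    x / b ^ Int.log b x ∈ Set.Ico 1 (b : K) := by
  have hb_pos : (0 : K) < b := Nat.cast_pos.2 (one_pos.trans hb)
  have hpow : (0 : K) < b ^ Int.log b x := zpow_pos hb_pos _
  have hlt := Int.lt_zpow_succ_log_self hb x
  rw [zpow_add_one₀ hb_pos.ne', mul_comm] at hlt
  exact ⟨(one_le_div hpow).2 (Int.zpow_log_le_self hb hx), (div_lt_iff₀ hpow).2 hlt⟩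

end Log

variable {n : ℕ} {l : ℤ} {κ : Fin (n + 1) → ℤ} {M : Matrix (Fin (n + 1)) (Fin (n + 1)) ℤ}
  {R : Mn (n + 1)}

theorem log_scale_mul_latticeElement (hR : R ∈ tile n) (hM : IsUnitriangular M)
    (hκ : ∑ i, κ i = 0) : Int.log 2 (scale (R * latticeElement l κ M)) = l := by
  have hs : scale R ∈ Set.Ico 1 (((2 : ℕ) : ℝ) * 1) := by simpa using hR.2.1
  have := log_mul_zpow_div one_lt_two one_pos hs l
  rwa [div_one, Nat.cast_ofNat, ← scale_latticeElement hM hκ, ← scale_mul] at this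

theorem log_diag_mul_latticeElement (hR : R ∈ tile n) (hM : IsUnitriangular M)
    (hκ : ∑ i, κ i = 0) (i : Fin n) :
    Int.log 2 ((R * latticeElement l κ M) i.castSucc i.castSucc /
      scale (R * latticeElement l κ M)) = κ i.castSucc := by
  have hpow : (2 : ℝ) ^ l ≠ 0 := by positivity
  rw [mul_apply_self_of_isUpperTriangular hR.1.isUpperTriangular
    (isPosTriangular_latticeElement hM).isUpperTriangular, latticeElement_apply_self hM, scale_mul,
    scale_latticeElement hM hκ, mul_left_comm, mul_comm (scale R), mul_div_mul_left _ _ hpow]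
  exact mod_cast log_mul_zpow_div one_lt_two (one_pos.trans_le hR.2.1.1)
    (by simpa using hR.2.2.1 i) (κ i.castSucc)

theorem latticeElement_eq_of_mul_eq {l' : ℤ} {κ' : Fin (n + 1) → ℤ}
    {M' : Matrix (Fin (n + 1)) (Fin (n + 1)) ℤ} {R' : Mn (n + 1)} (hR : R ∈ tile n)
    (hR' : R' ∈ tile n) (hM : IsUnitriangular M) (hM' : IsUnitriangular M') (hκ : ∑ i, κ i = 0)
    (hκ' : ∑ i, κ' i = 0) (h : R * latticeElement l κ M = R' * latticeElement l' κ' M') :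
    latticeElement l κ M = latticeElement l' κ' M' := by
  obtain rfl : l = l' := by
    rw [← log_scale_mul_latticeElement (l := l) hR hM hκ, h,
      log_scale_mul_latticeElement hR' hM' hκ']
  have castSucc_eq (i : Fin n) : κ i.castSucc = κ' i.castSucc := by
    rw [← log_diag_mul_latticeElement hR hM hκ, h, log_diag_mul_latticeElement hR' hM' hκ']
  obtain rfl : κ = κ' := by
    rw [Fin.sum_univ_castSucc, add_eq_zero_iff_neg_eq] at hκ hκ'
    ext i
    cases i using Fin.lastCases with
    | cast i => exact castSucc_eq i
    | last => rw [← hκ, ← hκ', Finset.sum_congr rfl fun i _ ↦ castSucc_eq i]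
  rw [unitriangular_eq_of_sizeReduced_mul_latticeElement_eq hR.1.isUpperTriangular
    hR'.1.isUpperTriangular hR.2.2.2 hR'.2.2.2 hM hM' h]

theorem exists_mem_tile_mul_mem_Pset {Z : Mn (n + 1)} (hZ : IsPosTriangular Z) :
    ∃ R ∈ tile n, ∃ p ∈ Pset (n + 1), R * p = Z := by
  let l := Int.log 2 (scale Z)
  let k (i : Fin n) : ℤ := Int.log 2 (Z i.castSucc i.castSucc / scale Z)
  let κ : Fin (n + 1) → ℤ := Fin.snoc k (-∑ i, k i)
  have hκ : ∑ i, κ i = 0 := by simp [Fin.sum_univ_castSucc, κ]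
  obtain ⟨R, M, hR, diag, hright, hM, mul_eq⟩ := exists_sizeReduced_mul_latticeElement_eq hZ l κ
  have hscale : scale R = scale Z / 2 ^ l := by
    rw [eq_div_iff (by positivity), ← scale_latticeElement hM hκ, ← scale_mul, mul_eq]
  have scale_Z_pos : 0 < scale Z := scale_pos hZ.det_pos.ne'
  have scale_R_pos : 0 < scale R := scale_pos hR.det_pos.ne'
  refine ⟨R, ⟨hR, ?_, fun i ↦ ?_, hright⟩, _, mem_Pset_iff.2 ⟨l, κ, M, hM, hκ, rfl⟩, mul_eq⟩
  · rw [hscale]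
    exact mod_cast div_zpow_log_mem_Ico one_lt_two scale_Z_pos
  · have ratio : R i.castSucc i.castSucc / scale R =
        Z i.castSucc i.castSucc / scale Z / 2 ^ k i := by
      rw [diag, hscale]
      simp only [κ, Fin.snoc_castSucc]
      field_simp
    have ratio_mem : R i.castSucc i.castSucc / scale R ∈ Set.Ico 1 2 := by
      rw [ratio]
      exact mod_cast div_zpow_log_mem_Ico one_lt_two
        (div_pos (hZ.diag_pos i.castSucc) scale_Z_pos)
    exact ⟨(one_le_div scale_R_pos).1 ratio_mem.1, (div_lt_iff₀ scale_R_pos).1 ratio_mem.2⟩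

theorem exists_mem_Fset_mul_mem_Pset {a : Mn (n + 1)} (ha : a.det ≠ 0) :
    ∃ b ∈ Fset (n + 1), ∃ p ∈ Pset (n + 1), b * p = a := by
  obtain ⟨k, hk, Z, hZ, rfl⟩ := exists_orthogonal_mul_posTriangular ha
  obtain ⟨R, hR, p, hp, rfl⟩ := exists_mem_tile_mul_mem_Pset hZ
  exact ⟨k * R, Fset_eq_orthogonalGroup_mul_tile ▸ Set.mul_mem_mul hk hR, p, hp,
    Matrix.mul_assoc _ _ _⟩

theorem eq_of_mem_Fset_mul_eq {a b p q : Mn (n + 1)} (ha : a ∈ Fset (n + 1))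
    (hb : b ∈ Fset (n + 1)) (hp : p ∈ Pset (n + 1)) (hq : q ∈ Pset (n + 1)) (h : a * p = b * q) :
    p = q := by
  rw [Fset_eq_orthogonalGroup_mul_tile] at ha hb
  obtain ⟨k, hk, R, hR, rfl⟩ := ha
  obtain ⟨k', hk', R', hR', rfl⟩ := hb
  obtain ⟨l, κ, M, hM, hκ, rfl⟩ := mem_Pset_iff.1 hp
  obtain ⟨l', κ', M', hM', hκ', rfl⟩ := mem_Pset_iff.1 hq
  refine latticeElement_eq_of_mul_eq hR hR' hM hM' hκ hκ' <|
    posTriangular_eq_of_orthogonal_mul_eq hk hk' (hR.1.mul (isPosTriangular_latticeElement hM))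
      (hR'.1.mul (isPosTriangular_latticeElement hM')) ?_
  rw [← Matrix.mul_assoc, ← Matrix.mul_assoc]
  exact h

end Tiling

section NullSets

open scoped Pointwise

variable {n : ℕ}

instance (n : ℕ) : BorelSpace (Mn n) :=
  inferInstanceAs (BorelSpace (Fin n → Fin n → ℝ))

instance (n : ℕ) : SigmaFinite (volume : Measure (Mn n)) :=
  inferInstanceAs (SigmaFinite (volume : Measure (Fin n → Fin n → ℝ)))

theorem volume_image_mul_right_eq_zero (g : Mn n) {E : Set (Mn n)} (hE : volume E = 0) :
    volume ((· * g) '' E) = 0 := by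
  let mulRight : Mn n →ₗ[ℝ] Mn n := LinearMap.mulRight ℝ g
  -- `Mn n` carries no norm, so the Haar scaling lemma is applied to the underlying pi type.
  exact (Measure.addHaar_image_linearMap (E := Fin n → Fin n → ℝ) volume mulRight E).trans
    (mul_eq_zero_of_right _ hE)

theorem volume_eq_zero_of_volume_image_mul_right {g : Mn n} (hg : IsUnit g.det) {E : Set (Mn n)}
    (hE : volume ((· * g) '' E) = 0) : volume E = 0 := by
  have := volume_image_mul_right_eq_zero g⁻¹ hE
  rw [Set.image_image] at this
  simpa [Matrix.mul_nonsing_inv_cancel_right _ _ hg] using this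

theorem volume_eq_zero_of_pairwise_disjoint_image_mul_right {T : Type*} [Uncountable T]
    {E : Set (Mn n)} (hE : IsCompact E) (g : T → Mn n) (hg : ∀ t, IsUnit (g t).det)
    (hdisj : Pairwise (Function.onFun Disjoint fun t ↦ (· * g t) '' E)) : volume E = 0 := by
  by_contra hpos
  have measurable (t : T) : MeasurableSet ((· * g t) '' E) :=
    (hE.image (continuous_mul_const (g t))).measurableSet
  have countable := Measure.countable_meas_pos_of_disjoint_iUnion (μ := volume) measurable hdisj
  have all_pos : {t | 0 < volume ((· * g t) '' E)} = Set.univ :=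
    Set.eq_univ_of_forall fun t ↦
      pos_iff_ne_zero.2 fun h ↦ hpos (volume_eq_zero_of_volume_image_mul_right (hg t) h)
  rw [all_pos, Set.countable_univ_iff] at countable
  exact not_countable countable

theorem isCompact_orthogonalGroup (ι : Type*) [Fintype ι] [DecidableEq ι] :
    IsCompact (Matrix.orthogonalGroup ι ℝ : Set (Matrix ι ι ℝ)) :=
  isCompact_Icc.matrix.of_isClosed_subset isClosed_unitary fun _ hk i j ↦
    abs_le.1 (entry_norm_bound_of_unitary hk i j)

theorem volume_orthogonalGroup_mul_eq_zero {T : Type*} [Uncountable T] {C : Set (Mn n)}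
    (hC : IsCompact C) (hpos : ∀ R ∈ C, IsPosTriangular R) (g : T → Mn n)
    (hg : ∀ t, IsPosTriangular (g t)) (φ : Mn n → T) (hφ : ∀ R ∈ C, ∀ t, φ (R * g t) = t) :
    volume ((Matrix.orthogonalGroup (Fin n) ℝ : Set (Mn n)) * C) = 0 := by
  refine volume_eq_zero_of_pairwise_disjoint_image_mul_right
    ((isCompact_orthogonalGroup _).mul hC) g (fun t ↦ (hg t).isUnit_det) fun t t' ht ↦ ?_
  refine Set.disjoint_left.2 ?_
  rintro _ ⟨_, ⟨k, hk, R, hR, rfl⟩, rfl⟩ ⟨_, ⟨k', hk', R', hR', rfl⟩, h⟩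
  have hRR' : R * g t = R' * g t' :=
    posTriangular_eq_of_orthogonal_mul_eq hk hk' ((hpos R hR).mul (hg t))
      ((hpos R' hR').mul (hg t')) (by simpa only [Matrix.mul_assoc] using h.symm)
  exact ht (by rw [← hφ R hR t, hRR', hφ R' hR' t'])

end NullSets

section Boundary

open scoped Pointwise

variable {n : ℕ} {R : Mn (n + 1)}

/-- The triangular part of the closure of `F`: the inequalities of `tile` made non-strict.
Positivity of the diagonal becomes non-strict as well, which makes the set closed in all of
`M_n(ℝ)`, but still holds because `scale R ≥ 1`. -/
def closedTile (n : ℕ) : Set (Mn (n + 1)) :=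
  {R | R.IsUpperTriangular ∧ (∀ i, 0 ≤ R i i) ∧ scale R ∈ Set.Icc 1 2 ∧
    (∀ i : Fin n, R i.castSucc i.castSucc ∈ Set.Icc (scale R) (2 * scale R)) ∧
    ∀ i j, i < j → R i j ∈ Set.Icc 0 (R i i)}

theorem tile_subset_closedTile : tile n ⊆ closedTile n :=
  fun _ ⟨hpos, hscale, hdiag, hright⟩ ↦ ⟨hpos.isUpperTriangular, fun i ↦ (hpos.diag_pos i).le,
    Set.Ico_subset_Icc_self hscale, fun i ↦ Set.Ico_subset_Icc_self (hdiag i),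
    fun i j hij ↦ Set.Ico_subset_Icc_self (hright i j hij)⟩

theorem isPosTriangular_of_mem_closedTile (hR : R ∈ closedTile n) : IsPosTriangular R := by
  obtain ⟨upper, nonneg, hscale, -⟩ := hR
  have hdet : R.det ≠ 0 := by
    rw [← abs_ne_zero, ← scale_pow_card]
    exact pow_ne_zero _ (one_pos.trans_le hscale.1).ne'
  rw [Matrix.det_of_isUpperTriangular upper, Finset.prod_ne_zero_iff] at hdet
  exact ⟨upper, fun i ↦ (nonneg i).lt_of_ne' (hdet i (Finset.mem_univ i))⟩

theorem scale_pos_of_mem_closedTile (hR : R ∈ closedTile n) : 0 < scale R :=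
  one_pos.trans_le hR.2.2.1.1

theorem apply_last_le_scale_of_mem_closedTile (hR : R ∈ closedTile n) :
    R (Fin.last n) (Fin.last n) ≤ scale R := by
  have hpos := isPosTriangular_of_mem_closedTile hR
  have hscale := scale_pos_of_mem_closedTile hR
  have hdet : (∏ i : Fin n, R i.castSucc i.castSucc) * R (Fin.last n) (Fin.last n) =
      scale R ^ n * scale R := by
    rw [← pow_succ, ← Fin.prod_univ_castSucc (fun i ↦ R i i),
      ← Matrix.det_of_isUpperTriangular hpos.isUpperTriangular, ← abs_of_pos hpos.det_pos,
      ← scale_pow_card, Fintype.card_fin]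
  have hprod : scale R ^ n ≤ ∏ i : Fin n, R i.castSucc i.castSucc := by
    simpa using Finset.prod_le_prod (s := Finset.univ) (fun i _ ↦ hscale.le)
      fun i _ ↦ (hR.2.2.2.1 i).1
  refine le_of_mul_le_mul_left ?_ (pow_pos hscale n)
  rw [← hdet]
  exact mul_le_mul_of_nonneg_right hprod (hpos.diag_pos _).le

theorem closedTile_subset_matrix : closedTile n ⊆ (Set.Icc 0 4).matrix := by
  intro R hR
  obtain ⟨upper, nonneg, hscale, hdiag, hright⟩ := id hR
  have diag_le (i : Fin (n + 1)) : R i i ≤ 4 := by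
    cases i using Fin.lastCases with
    | cast i => linarith [(hdiag i).2, hscale.2]
    | last => linarith [apply_last_le_scale_of_mem_closedTile hR, hscale.2]
  intro i j
  rcases lt_trichotomy i j with hij | rfl | hij
  · exact ⟨(hright i j hij).1, (hright i j hij).2.trans (diag_le i)⟩
  · exact ⟨nonneg i, diag_le i⟩
  · rw [upper hij]
    norm_num

theorem isClosed_closedTile : IsClosed (closedTile n) := by
  simp only [closedTile, Set.ofPred_and, Set.ofPred_forall]
  have entry (i j : Fin (n + 1)) : Continuous fun R : Mn (n + 1) ↦ R i j :=
    continuous_id.matrix_elem i j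
  refine isClosed_setOfPred_blockTriangular.inter <|
    (isClosed_iInter fun i ↦ isClosed_le continuous_const (entry i i)).inter <|
    (isClosed_Icc.preimage continuous_scale).inter <| IsClosed.inter ?_ ?_
  · exact isClosed_iInter fun i ↦ (isClosed_le continuous_scale (entry _ _)).inter
      (isClosed_le (entry _ _) (continuous_scale.const_mul 2))
  · exact isClosed_iInter fun i ↦ isClosed_iInter fun j ↦ isClosed_iInter fun _ ↦
      (isClosed_le continuous_const (entry i j)).inter (isClosed_le (entry i j) (entry i i))

theorem isCompact_closedTile : IsCompact (closedTile n) :=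
  isCompact_Icc.matrix.of_isClosed_subset isClosed_closedTile closedTile_subset_matrix

theorem closure_Fset_subset : closure (Fset (n + 1)) ⊆
    (Matrix.orthogonalGroup (Fin (n + 1)) ℝ : Set (Mn (n + 1))) * closedTile n := by
  rw [Fset_eq_orthogonalGroup_mul_tile]
  exact closure_minimal (Set.mul_subset_mul_left tile_subset_closedTile)
    ((isCompact_orthogonalGroup _).mul isCompact_closedTile).isClosed

theorem volume_orthogonalGroup_mul_scale_facet_eq_zero :
    volume ((Matrix.orthogonalGroup (Fin (n + 1)) ℝ : Set (Mn (n + 1))) *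
      (closedTile n ∩ {R | scale R = 2})) = 0 := by
  refine volume_orthogonalGroup_mul_eq_zero
    (isCompact_closedTile.inter_right (isClosed_eq continuous_scale continuous_const))
    (fun R hR ↦ isPosTriangular_of_mem_closedTile hR.1)
    (fun t : ℝ ↦ Matrix.diagonal fun _ ↦ Real.exp t) (fun t ↦ .diagonal fun _ ↦ Real.exp_pos t)
    (fun Z ↦ Real.log (scale Z / 2)) fun R hR t ↦ ?_
  have hR2 : scale R = 2 := hR.2
  rw [scale_mul, ← Matrix.smul_one_eq_diagonal,
    scale_smul_of_det_eq_one (Real.exp_pos t).le Matrix.det_one, hR2,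
    mul_div_cancel_left₀ _ two_ne_zero, Real.log_exp]

theorem volume_orthogonalGroup_mul_diag_facet_eq_zero (i : Fin n) :
    volume ((Matrix.orthogonalGroup (Fin (n + 1)) ℝ : Set (Mn (n + 1))) *
      (closedTile n ∩ {R | R i.castSucc i.castSucc = 2 * scale R})) = 0 := by
  let weight (t : ℝ) : Fin (n + 1) → ℝ :=
    Pi.mulSingle i.castSucc (Real.exp t) * Pi.mulSingle (Fin.last n) (Real.exp (-t))
  have weight_pos (t : ℝ) (j : Fin (n + 1)) : 0 < weight t j := by
    simp only [weight, Pi.mul_apply, Pi.mulSingle_apply]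
    split_ifs <;> positivity
  have weight_castSucc (t : ℝ) : weight t i.castSucc = Real.exp t := by simp [weight]
  have scale_weight (t : ℝ) : scale (Matrix.diagonal (weight t)) = 1 :=
    scale_of_det_eq_one <| by
      simp [weight, Matrix.det_diagonal, Finset.prod_mul_distrib, ← Real.exp_add]
  refine volume_orthogonalGroup_mul_eq_zero
    (isCompact_closedTile.inter_right
      (isClosed_eq (continuous_id.matrix_elem _ _) (continuous_scale.const_mul 2)))
    (fun R hR ↦ isPosTriangular_of_mem_closedTile hR.1)
    (fun t ↦ Matrix.diagonal (weight t)) (fun t ↦ .diagonal (weight_pos t))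
    (fun Z ↦ Real.log (Z i.castSucc i.castSucc / (2 * scale Z))) fun R hR t ↦ ?_
  have hfacet : R i.castSucc i.castSucc = 2 * scale R := hR.2
  have hscale : 0 < scale R := scale_pos_of_mem_closedTile hR.1
  rw [Matrix.mul_diagonal, weight_castSucc, scale_mul, scale_weight, mul_one, hfacet,
    mul_div_cancel_left₀ _ (by positivity), Real.log_exp]

theorem volume_orthogonalGroup_mul_right_facet_eq_zero {i j : Fin (n + 1)} (hij : i < j) :
    volume ((Matrix.orthogonalGroup (Fin (n + 1)) ℝ : Set (Mn (n + 1))) *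
      (closedTile n ∩ {R | R i j = R i i})) = 0 := by
  refine volume_orthogonalGroup_mul_eq_zero
    (isCompact_closedTile.inter_right
      (isClosed_eq (continuous_id.matrix_elem _ _) (continuous_id.matrix_elem _ _)))
    (fun R hR ↦ isPosTriangular_of_mem_closedTile hR.1)
    (Matrix.transvection i j) (.transvection hij)
    (fun Z ↦ Z i j / Z i i - 1) fun R hR t ↦ ?_
  have hfacet : R i j = R i i := hR.2
  have hpos := (isPosTriangular_of_mem_closedTile hR.1).diag_pos i
  rw [Matrix.mul_transvection_apply_same, Matrix.mul_transvection_apply_of_ne _ _ _ _ hij.ne,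
    hfacet, add_div, mul_div_cancel_right₀ _ hpos.ne', div_self hpos.ne', add_sub_cancel_left]

theorem closedTile_diff_tile_subset : closedTile n \ tile n ⊆
    closedTile n ∩ {R | scale R = 2} ∪
      (⋃ i : Fin n, closedTile n ∩ {R | R i.castSucc i.castSucc = 2 * scale R}) ∪
      ⋃ (i : Fin (n + 1)) (j : Fin (n + 1)) (_ : i < j), closedTile n ∩ {R | R i j = R i i} := by
  rintro R ⟨hR, hR'⟩
  contrapose! hR'
  simp only [Set.mem_union, Set.mem_iUnion, Set.mem_inter_iff, hR, true_and, Set.mem_ofPred_eq,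
    not_or, not_exists] at hR'
  obtain ⟨⟨hscale, hdiag⟩, hright⟩ := hR'
  exact ⟨isPosTriangular_of_mem_closedTile hR, ⟨hR.2.2.1.1, hR.2.2.1.2.lt_of_ne hscale⟩,
    fun i ↦ ⟨(hR.2.2.2.1 i).1, (hR.2.2.2.1 i).2.lt_of_ne (hdiag i)⟩,
    fun i j hij ↦ ⟨(hR.2.2.2.2 i j hij).1, (hR.2.2.2.2 i j hij).2.lt_of_ne (hright i j hij)⟩⟩

theorem volume_closure_Fset_diff_Fset : volume (closure (Fset (n + 1)) \ Fset (n + 1)) = 0 := by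
  have cover : closure (Fset (n + 1)) \ Fset (n + 1) ⊆
      (Matrix.orthogonalGroup (Fin (n + 1)) ℝ : Set (Mn (n + 1))) * (closedTile n \ tile n) := by
    rintro a ⟨ha, ha'⟩
    obtain ⟨k, hk, R, hR, rfl⟩ := closure_Fset_subset ha
    refine Set.mul_mem_mul hk ⟨hR, fun hR' ↦ ha' ?_⟩
    rw [Fset_eq_orthogonalGroup_mul_tile]
    exact Set.mul_mem_mul hk hR'
  refine measure_mono_null (cover.trans (Set.mul_subset_mul_left closedTile_diff_tile_subset)) ?_
  simp only [Set.mul_union, Set.mul_iUnion, measure_union_null_iff, measure_iUnion_null_iff]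
  exact ⟨⟨volume_orthogonalGroup_mul_scale_facet_eq_zero,
    volume_orthogonalGroup_mul_diag_facet_eq_zero⟩,
    fun _ _ hij ↦ volume_orthogonalGroup_mul_right_facet_eq_zero hij⟩

end Boundary

/-- The pair `(F, P)` is a tiling system for `GL_n(ℝ)`:
(i) `F̄·p ∩ F̄·q` has Lebesgue measure zero (as a subset of `ℝ^{n²}`) for all distinct
`p, q ∈ P`, and (ii) `GL_n(ℝ) \ ⋃_{p∈P} F̄·p` has Lebesgue measure zero, where `F̄` is
the closure of `F` and `F̄·p = {a * p : a ∈ F̄}`. -/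
theorem stmt_13 (n : ℕ) (hn : 1 ≤ n) :
    (∀ p ∈ Pset n, ∀ q ∈ Pset n, p ≠ q →
      volume (((· * p) '' closure (Fset n)) ∩ ((· * q) '' closure (Fset n))) = 0) ∧
    volume ({a : Mn n | a.det ≠ 0} \ ⋃ p ∈ Pset n, (· * p) '' closure (Fset n)) = 0 := by
  obtain ⟨m, rfl⟩ := Nat.exists_eq_add_of_le' hn
  constructor
  · intro p hp q hq hpq
    have overlap : ((· * p) '' closure (Fset (m + 1))) ∩ ((· * q) '' closure (Fset (m + 1))) ⊆
        (· * p) '' (closure (Fset (m + 1)) \ Fset (m + 1)) ∪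
          (· * q) '' (closure (Fset (m + 1)) \ Fset (m + 1)) := by
      rintro _ ⟨⟨a, ha, rfl⟩, b, hb, h⟩
      by_cases ha' : a ∈ Fset (m + 1)
      · exact .inr ⟨b, ⟨hb, fun hb' ↦ hpq (eq_of_mem_Fset_mul_eq ha' hb' hp hq h.symm)⟩, h⟩
      · exact .inl ⟨a, ⟨ha, ha'⟩, rfl⟩
    exact measure_mono_null overlap <| measure_union_null
      (volume_image_mul_right_eq_zero p volume_closure_Fset_diff_Fset)
      (volume_image_mul_right_eq_zero q volume_closure_Fset_diff_Fset)
  · have cover : {a : Mn (m + 1) | a.det ≠ 0} ⊆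
        ⋃ p ∈ Pset (m + 1), (· * p) '' closure (Fset (m + 1)) := by
      intro a ha
      obtain ⟨b, hb, p, hp, rfl⟩ := exists_mem_Fset_mul_mem_Pset ha
      exact Set.mem_biUnion hp ⟨b, subset_closure hb, rfl⟩
    rw [Set.sdiff_eq_empty.2 cover, measure_empty]
end
end
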